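/- arXiv:math/0010260 — 5 statements merged into one kernel-verified Lean document; each statement's English description precedes it below -/
import Mathlib

section
/- Suppose γ : ℕ × ℕ → ℕ is such that for every prime p, every finite extension L of ℚ_p of degree d' with residue field degree f_L, and every k×n m-sparse polynomial system over L, the number of isolated roots of that system in L^n is at most p^{d'n}·(1 − 1/p^{f_L})^n·γ(n,m). Fix a prime p and positive integers d and δ, let L be the compositum inside a fixed algebraic closure of ℚ_p (contained in ℂ_p) of all finite extensions of ℚ_p of degree at most dδ, and let D_p and f_p be the degree and residue field degree of L over ℚ_p. Then for every degree-d algebraic extension 𝓛 of ℚ_p, regarded as a subfield of ℂ_p, and every k×n m-sparse polynomial system G over 𝓛, the number of isolated roots of G in ℂ_p^n of degree at most δ over 𝓛 is at most p^{nD_p}·(1 − 1/p^{f_p})^n·γ(n,m). -/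
/-!
A coordinate of degree at most `δ` over `𝓛` generates a field of degree at most `d * δ` over `ℚ_p`,
so every point counted has its coordinates in the compositum `L`. The image of `𝓛` lies in `L` as
well, since its elements have degree `1` over `𝓛`. Hence `G` is also a sparse system over `L`, and
the points counted are among its isolated roots in `L^n`, to which the assumed bound applies.
-/

open MvPolynomial Filter Topology

/-- The zero set in `F^n` of a `k`-tuple of `n`-variate polynomials. -/
def zeroSet {F : Type*} [CommSemiring F] {k n : ℕ}
    (G : Fin k → MvPolynomial (Fin n) F) : Set (Fin n → F) :=
  {x | ∀ i, MvPolynomial.eval x (G i) = 0}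

/-- `ζ` is an isolated root of the system `G`: it is a root, and an isolated point of the
zero set of `G` in the metric topology. -/
def IsIsolatedRoot {F : Type*} [NormedField F] {k n : ℕ}
    (G : Fin k → MvPolynomial (Fin n) F) (ζ : Fin n → F) : Prop :=
  ζ ∈ zeroSet G ∧ 𝓝[zeroSet G \ {ζ}] ζ = ⊥

/-- A `k × n` `m`-sparse polynomial system: all the `gᵢ` are nonzero and the union of their
supports has exactly `m` elements. -/
def IsSparseSystem {F : Type*} [CommSemiring F] {k n : ℕ}
    (G : Fin k → MvPolynomial (Fin n) F) (m : ℕ) : Prop :=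
  (∀ i, G i ≠ 0) ∧ (Finset.univ.biUnion fun i => (G i).support).card = m

/-- The property that `γ : ℕ × ℕ → ℕ` bounds the number of isolated roots of sparse systems
over finite extensions of `ℚ_p`, for all primes `p`.  Here `Cp` ranges over all fields
satisfying the characterizing axioms of `ℂ_p` (a complete algebraically closed ultrametric
field, containing `ℚ_p` isometrically, in which the elements algebraic over `ℚ_p` are dense),
`L` is a degree-`d` extension of `ℚ_p` regarded as a subfield of `ℂ_p`, with ramification
degree `eL` and residue field degree `fL` (characterized by `eL * fL = d` together with the
fact that the value group of `L` is `(1/eL)·ℤ`, i.e. `‖L*‖ = p^{(1/eL)·ℤ}`). -/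
def LocalSparseBound (γ : ℕ × ℕ → ℕ) : Prop :=
  ∀ (p : ℕ) (_ : Fact p.Prime) (d : ℕ) (_ : 0 < d)
    (Cp : Type) (_ : NormedField Cp) (_ : IsUltrametricDist Cp)
    (_ : CompleteSpace Cp) (_ : IsAlgClosed Cp) (_ : Algebra ℚ_[p] Cp)
    (_ : Isometry (algebraMap ℚ_[p] Cp))
    (_ : Dense {x : Cp | IsAlgebraic ℚ_[p] x})
    (L : Type) (_ : Field L) (_ : Algebra ℚ_[p] L) (_ : Algebra L Cp)
    (_ : IsScalarTower ℚ_[p] L Cp) (_ : FiniteDimensional ℚ_[p] L)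
    (_ : Module.finrank ℚ_[p] L = d)
    (eL fL : ℕ) (_ : 0 < eL) (_ : eL * fL = d)
    (_ : ∀ x : L, x ≠ 0 → ∃ j : ℤ, ‖algebraMap L Cp x‖ = (p : ℝ) ^ ((j : ℝ) / (eL : ℝ)))
    (_ : ∃ x : L, x ≠ 0 ∧ ‖algebraMap L Cp x‖ = (p : ℝ) ^ (-(1 : ℝ) / (eL : ℝ)))
    (k n m : ℕ) (G : Fin k → MvPolynomial (Fin n) L), IsSparseSystem G m →
      {ζ : Fin n → L | IsIsolatedRoot (fun i => (G i).map (algebraMap L Cp))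
          (fun j => algebraMap L Cp (ζ j))}.Finite ∧
      ({ζ : Fin n → L | IsIsolatedRoot (fun i => (G i).map (algebraMap L Cp))
          (fun j => algebraMap L Cp (ζ j))}.ncard : ℝ) ≤
        (p : ℝ) ^ (d * n) * (1 - 1 / (p : ℝ) ^ fL) ^ n * γ (n, m)


/-- `x` is algebraic of degree at most `δ` over (the image of) `L`, i.e. it is annihilated by
some nonzero polynomial over `L` of degree at most `δ`. -/
def HasDegreeAtMost {L F : Type*} [Field L] [Field F] (ι : L →+* F) (δ : ℕ) (x : F) : Prop :=
  ∃ q : Polynomial L, q ≠ 0 ∧ q.natDegree ≤ δ ∧ Polynomial.eval₂ ι x q = 0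

lemma IsSparseSystem.map {R S : Type*} [CommSemiring R] [CommSemiring S] {k n m : ℕ}
    {G : Fin k → MvPolynomial (Fin n) R} (hG : IsSparseSystem G m) {φ : R →+* S}
    (hφ : Function.Injective φ) : IsSparseSystem (fun i => (G i).map φ) m := by
  refine ⟨fun i => (map_ne_zero_iff _ (MvPolynomial.map_injective φ hφ)).2 (hG.1 i), ?_⟩
  simpa only [MvPolynomial.support_map_of_injective _ hφ] using hG.2

lemma hasDegreeAtMost_map {M C : Type*} [Field M] [Field C] (ι : M →+* C) {δ : ℕ} (hδ : 0 < δ)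
    (a : M) : HasDegreeAtMost ι δ (ι a) :=
  ⟨Polynomial.X - Polynomial.C a, Polynomial.X_sub_C_ne_zero a,
    (Polynomial.natDegree_X_sub_C a).trans_le hδ, by simp⟩

namespace HasDegreeAtMost

variable {M C : Type*} [Field M] [Field C] [Algebra M C] {δ : ℕ} {x : C}

lemma isIntegral (hx : HasDegreeAtMost (algebraMap M C) δ x) : IsIntegral M x :=
  let ⟨q, hq, _, hqx⟩ := hx
  IsAlgebraic.isIntegral ⟨q, hq, hqx⟩

lemma finrank_adjoin_simple_le (hx : HasDegreeAtMost (algebraMap M C) δ x) :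
    Module.finrank M (IntermediateField.adjoin M {x}) ≤ δ := by
  rw [IntermediateField.adjoin.finrank hx.isIntegral]
  obtain ⟨q, hq, hqδ, hqx⟩ := hx
  exact (Polynomial.natDegree_le_of_dvd (minpoly.dvd M x hqx) hq).trans hqδ

lemma exists_intermediateField_finrank_le (K : Type*) [Field K] [Algebra K M] [Algebra K C]
    [IsScalarTower K M C] [FiniteDimensional K M] (hx : HasDegreeAtMost (algebraMap M C) δ x) :
    ∃ F : IntermediateField K C, FiniteDimensional K F ∧
      Module.finrank K F ≤ Module.finrank K M * δ ∧ x ∈ F := by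
  let E := IntermediateField.adjoin M {x}
  have : FiniteDimensional M E := IntermediateField.adjoin.finiteDimensional hx.isIntegral
  refine ⟨E.restrictScalars K, FiniteDimensional.trans K M E, ?_,
    IntermediateField.mem_adjoin_simple_self M x⟩
  calc Module.finrank K E = Module.finrank K M * Module.finrank M E :=
        (Module.finrank_mul_finrank K M E).symm
    _ ≤ Module.finrank K M * δ := Nat.mul_le_mul_left _ hx.finrank_adjoin_simple_le

end HasDegreeAtMost

section Padic

variable {γ : ℕ × ℕ → ℕ} {p : ℕ} [Fact p.Prime] {Cp : Type} [NormedField Cp] [IsUltrametricDist Cp]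
  [CompleteSpace Cp] [IsAlgClosed Cp] [Algebra ℚ_[p] Cp]

theorem LocalSparseBound.finite_and_ncard_isolatedRoots_range_le (hγ : LocalSparseBound γ)
    (hiso : Isometry (algebraMap ℚ_[p] Cp)) (hdense : Dense {x : Cp | IsAlgebraic ℚ_[p] x})
    {L : Type} [Field L] [Algebra ℚ_[p] L] [Algebra L Cp] [IsScalarTower ℚ_[p] L Cp]
    [FiniteDimensional ℚ_[p] L] {e f : ℕ} (hef : e * f = Module.finrank ℚ_[p] L)
    (hval : ∀ x : L, x ≠ 0 → ∃ j : ℤ, ‖algebraMap L Cp x‖ = (p : ℝ) ^ ((j : ℝ) / (e : ℝ)))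
    (hunif : ∃ x : L, x ≠ 0 ∧ ‖algebraMap L Cp x‖ = (p : ℝ) ^ (-(1 : ℝ) / (e : ℝ)))
    {k n m : ℕ} {G : Fin k → MvPolynomial (Fin n) L} (hG : IsSparseSystem G m) :
    {x : Fin n → Cp | IsIsolatedRoot (fun i => (G i).map (algebraMap L Cp)) x ∧
        ∀ j, x j ∈ Set.range (algebraMap L Cp)}.Finite ∧
      ({x : Fin n → Cp | IsIsolatedRoot (fun i => (G i).map (algebraMap L Cp)) x ∧
        ∀ j, x j ∈ Set.range (algebraMap L Cp)}.ncard : ℝ) ≤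
        (p : ℝ) ^ (n * Module.finrank ℚ_[p] L) * (1 - 1 / (p : ℝ) ^ f) ^ n * γ (n, m) := by
  have hpos : 0 < Module.finrank ℚ_[p] L := Module.finrank_pos
  have he : 0 < e := Nat.pos_of_mul_pos_right (hef ▸ hpos)
  obtain ⟨hfin, hcard⟩ := hγ p inferInstance _ hpos Cp inferInstance inferInstance inferInstance
    inferInstance inferInstance hiso hdense L inferInstance inferInstance inferInstance
    inferInstance inferInstance rfl e f he hef hval hunif k n m G hG
  set S := {ζ : Fin n → L | IsIsolatedRoot (fun i => (G i).map (algebraMap L Cp))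
    fun j => algebraMap L Cp (ζ j)}
  have himage : {x : Fin n → Cp | IsIsolatedRoot (fun i => (G i).map (algebraMap L Cp)) x ∧
      ∀ j, x j ∈ Set.range (algebraMap L Cp)} = (algebraMap L Cp ∘ ·) '' S := by
    ext x
    constructor
    · rintro ⟨hx, hxL⟩
      choose ζ hζ using hxL
      obtain rfl : algebraMap L Cp ∘ ζ = x := funext hζ
      exact ⟨ζ, hx, rfl⟩
    · rintro ⟨ζ, hζ, rfl⟩
      exact ⟨hζ, fun j => ⟨ζ j, rfl⟩⟩
  rw [himage, Set.ncard_image_of_injective S (algebraMap L Cp).injective.comp_left, mul_comm n]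
  exact ⟨hfin.image _, hcard⟩

theorem bounded_degree_roots_padic_explicit_general (hγ : LocalSparseBound γ)
    (hiso : Isometry (algebraMap ℚ_[p] Cp)) (hdense : Dense {x : Cp | IsAlgebraic ℚ_[p] x})
    {𝓛 : Type*} [Field 𝓛] [Algebra ℚ_[p] 𝓛] [Algebra 𝓛 Cp] [IsScalarTower ℚ_[p] 𝓛 Cp]
    [FiniteDimensional ℚ_[p] 𝓛] {δ : ℕ} (hδ : 0 < δ)
    {L : IntermediateField ℚ_[p] Cp} [FiniteDimensional ℚ_[p] L]
    (hL : ∀ F : IntermediateField ℚ_[p] Cp, FiniteDimensional ℚ_[p] F →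
      Module.finrank ℚ_[p] F ≤ Module.finrank ℚ_[p] 𝓛 * δ → F ≤ L)
    {e f : ℕ} (hef : e * f = Module.finrank ℚ_[p] L)
    (hval : ∀ x : L, x ≠ 0 → ∃ j : ℤ, ‖(x : Cp)‖ = (p : ℝ) ^ ((j : ℝ) / (e : ℝ)))
    (hunif : ∃ x : L, x ≠ 0 ∧ ‖(x : Cp)‖ = (p : ℝ) ^ (-(1 : ℝ) / (e : ℝ)))
    {k n m : ℕ} {G : Fin k → MvPolynomial (Fin n) 𝓛} (hG : IsSparseSystem G m) :
    {x : Fin n → Cp | IsIsolatedRoot (fun i => (G i).map (algebraMap 𝓛 Cp)) x ∧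
        ∀ i, HasDegreeAtMost (algebraMap 𝓛 Cp) δ (x i)}.Finite ∧
      ({x : Fin n → Cp | IsIsolatedRoot (fun i => (G i).map (algebraMap 𝓛 Cp)) x ∧
        ∀ i, HasDegreeAtMost (algebraMap 𝓛 Cp) δ (x i)}.ncard : ℝ) ≤
        (p : ℝ) ^ (n * Module.finrank ℚ_[p] L) * (1 - 1 / (p : ℝ) ^ f) ^ n * γ (n, m) := by
  have mem_L {x : Cp} (hx : HasDegreeAtMost (algebraMap 𝓛 Cp) δ x) : x ∈ L :=
    let ⟨F, hF, hdeg, hxF⟩ := hx.exists_intermediateField_finrank_le ℚ_[p]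
    hL F hF hdeg hxF
  let φ : 𝓛 →+* L :=
    (algebraMap 𝓛 Cp).codRestrict L fun a => mem_L (hasDegreeAtMost_map _ hδ a)
  have hφ : (algebraMap L Cp).comp φ = algebraMap 𝓛 Cp := rfl
  obtain ⟨hfin, hcard⟩ := hγ.finite_and_ncard_isolatedRoots_range_le hiso hdense hef hval hunif
    (hG.map φ.injective)
  simp only [MvPolynomial.map_map, hφ] at hfin hcard
  have hsub : {x : Fin n → Cp | IsIsolatedRoot (fun i => (G i).map (algebraMap 𝓛 Cp)) x ∧
      ∀ i, HasDegreeAtMost (algebraMap 𝓛 Cp) δ (x i)} ⊆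
      {x | IsIsolatedRoot (fun i => (G i).map (algebraMap 𝓛 Cp)) x ∧
        ∀ i, x i ∈ Set.range (algebraMap L Cp)} :=
    fun x hx => ⟨hx.1, fun i => ⟨⟨x i, mem_L (hx.2 i)⟩, rfl⟩⟩
  exact ⟨hfin.subset hsub, (Nat.cast_le.2 (Set.ncard_le_ncard hsub hfin)).trans hcard⟩

end Padic

/-- **Explicit bound for Corollary 3, `p`-adic case.** Suppose `γ(n,m)` bounds the number of
isolated roots of sparse systems over finite extensions of `ℚ_p` as in Theorem 1.  Let `L` be
the compositum inside `ℂ_p` of all finite extensions of `ℚ_p` of degree at most `d·δ` (i.e.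
the supremum of all finite-dimensional intermediate fields of `ℂ_p/ℚ_p` of degree at most
`d·δ`; these all lie in the algebraic closure of `ℚ_p` inside `ℂ_p`), and let `Dp` and `fp`
be its degree and residue field degree over `ℚ_p`.  Then any `k × n` `m`-sparse polynomial
system over a degree-`d` extension `𝓛` of `ℚ_p` has at most `p^{n·Dp}·(1 - 1/p^{fp})^n·γ(n,m)`
isolated roots in `ℂ_pⁿ` of degree at most `δ` over `𝓛`. -/
theorem bounded_degree_roots_padic_explicit (γ : ℕ × ℕ → ℕ) (hγ : LocalSparseBound γ)
    (p : ℕ) [Fact p.Prime] (d δ : ℕ) (hd : 0 < d) (hδ : 0 < δ) :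
    ∀ (Cp : Type) (_ : NormedField Cp) (_ : IsUltrametricDist Cp)
      (_ : CompleteSpace Cp) (_ : IsAlgClosed Cp) (_ : Algebra ℚ_[p] Cp)
      (_ : Isometry (algebraMap ℚ_[p] Cp))
      (_ : Dense {x : Cp | IsAlgebraic ℚ_[p] x})
      (L : IntermediateField ℚ_[p] Cp),
      L = sSup {F : IntermediateField ℚ_[p] Cp |
            FiniteDimensional ℚ_[p] ↥F ∧ Module.finrank ℚ_[p] ↥F ≤ d * δ} →
      ∀ (_ : FiniteDimensional ℚ_[p] ↥L) (Dp fp ep : ℕ),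
        Module.finrank ℚ_[p] ↥L = Dp → 0 < ep → ep * fp = Dp →
        (∀ x : ↥L, x ≠ 0 → ∃ j : ℤ, ‖(x : Cp)‖ = (p : ℝ) ^ ((j : ℝ) / (ep : ℝ))) →
        (∃ x : ↥L, x ≠ 0 ∧ ‖(x : Cp)‖ = (p : ℝ) ^ (-(1 : ℝ) / (ep : ℝ))) →
      ∀ (𝓛 : Type) (_ : Field 𝓛) (_ : Algebra ℚ_[p] 𝓛) (_ : Algebra 𝓛 Cp)
        (_ : IsScalarTower ℚ_[p] 𝓛 Cp) (_ : FiniteDimensional ℚ_[p] 𝓛)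
        (_ : Module.finrank ℚ_[p] 𝓛 = d)
        (k n m : ℕ) (G : Fin k → MvPolynomial (Fin n) 𝓛), IsSparseSystem G m →
          {x : Fin n → Cp | IsIsolatedRoot (fun i => (G i).map (algebraMap 𝓛 Cp)) x ∧
              ∀ i, HasDegreeAtMost (algebraMap 𝓛 Cp) δ (x i)}.Finite ∧
          ({x : Fin n → Cp | IsIsolatedRoot (fun i => (G i).map (algebraMap 𝓛 Cp)) x ∧
              ∀ i, HasDegreeAtMost (algebraMap 𝓛 Cp) δ (x i)}.ncard : ℝ) ≤
            (p : ℝ) ^ (n * Dp) * (1 - 1 / (p : ℝ) ^ fp) ^ n * γ (n, m) := by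
  rintro Cp _ _ _ _ _ hiso hdense L hL _ _ fp ep rfl - hef hval hunif 𝓛 _ _ _ _ _ rfl k n m G hG
  exact bounded_degree_roots_padic_explicit_general hγ hiso hdense hδ
    (fun F hF hdeg => hL.symm ▸ le_sSup ⟨hF, hdeg⟩) hef hval hunif hG
end

section
/- Let p be a prime and let g_1,…,g_k ∈ ℂ_p[x_1,…,x_n] be polynomials. Then there exists a matrix (a_{ij}) with entries in ℚ_p, having n rows and k columns, such that the zero set in ℂ_p^n of the n×n-tuple (a_{11}g_1 + ⋯ + a_{1k}g_k, …, a_{n1}g_1 + ⋯ + a_{nk}g_k) is the union of the zero set of (g_1,…,g_k) in ℂ_p^n and a finite (possibly empty) set of points. -/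
/-!
Each polynomial of the square system is a generic linear combination of the `g j`, with coefficients
in an infinite field. Such a combination avoids any finite set of primes that do not contain all the
`g j`. Choosing it outside those minimal primes of the preceding combinations raises by one the
height of the primes that contain the combinations but not all the `g j`. After `n` steps these
primes have height at least `n`, the dimension of the polynomial ring, so they are among the
finitely many minimal primes of the ideal of the combinations. The vanishing ideal of an extra zero
is such a prime, and it determines the zero.
-/

open MvPolynomial Filter Topology

section DivisionRing

variable {K M : Type*} [DivisionRing K] [Infinite K] [AddCommGroup M] [Module K M]

lemma exists_mem_forall_notMem_of_forall_not_le {ι : Type*} [Finite ι] (V : Submodule K M)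
    (W : ι → Submodule K M) (hVW : ∀ i, ¬ V ≤ W i) : ∃ v ∈ V, ∀ i, v ∉ W i := by
  by_contra! hcover
  have hunion : ⋃ i, ((W i).comap V.subtype : Set V) = Set.univ :=
    Set.iUnion_eq_univ_iff.mpr fun v => hcover v v.2
  obtain ⟨i, hi⟩ := Subspace.exists_eq_top_of_iUnion_eq_univ hunion
  exact hVW i (Submodule.comap_subtype_eq_top.mp hi)

end DivisionRing

section Noetherian

variable {K R : Type*} [Field K] [Infinite K] [CommRing R] [IsNoetherianRing R] [Algebra K R]

lemma exists_mem_forall_minimalPrimes_notMem (V : Submodule K R) (I : Ideal R) :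
    ∃ r ∈ V, ∀ Q ∈ I.minimalPrimes, ¬ V ≤ Q.restrictScalars K → r ∉ Q := by
  have : Finite {Q ∈ I.minimalPrimes | ¬ V ≤ Q.restrictScalars K} :=
    (I.finite_minimalPrimes_of_isNoetherianRing R).subset (Set.sep_subset _ _)
  obtain ⟨r, hrV, hr⟩ := exists_mem_forall_notMem_of_forall_not_le V
    (fun Q : {Q ∈ I.minimalPrimes | ¬ V ≤ Q.restrictScalars K} => Q.1.restrictScalars K)
    fun Q => Q.2.2
  exact ⟨r, hrV, fun Q hQ hVQ => hr ⟨Q, hQ, hVQ⟩⟩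

lemma exists_fin_forall_isPrime_le_height (V : Submodule K R) (m : ℕ) :
    ∃ f : Fin m → R, (∀ i, f i ∈ V) ∧ ∀ P : Ideal R, P.IsPrime → Ideal.span (Set.range f) ≤ P →
      ¬ V ≤ P.restrictScalars K → (m : ℕ∞) ≤ P.height := by
  induction m with
  | zero => exact ⟨Fin.elim0, fun i => i.elim0, fun P _ _ _ => by simp⟩
  | succ m ih =>
    obtain ⟨f, hfV, hf⟩ := ih
    obtain ⟨r, hrV, hr⟩ := exists_mem_forall_minimalPrimes_notMem V (Ideal.span (Set.range f))
    refine ⟨Fin.cons r f, Fin.cases hrV hfV, fun P hP hspan hVP => ?_⟩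
    rw [Fin.range_cons, Ideal.span_insert, sup_le_iff, Ideal.span_singleton_le_iff_mem] at hspan
    obtain ⟨hrP, hfP⟩ := hspan
    obtain ⟨Q, hQ, hQP⟩ := Ideal.exists_minimalPrimes_le hfP
    have hQ_prime : Q.IsPrime := hQ.1.1
    have hVQ : ¬ V ≤ Q.restrictScalars K := fun hVQ => hVP (hVQ.trans hQP)
    have hQP_lt : Q < P := lt_of_le_not_ge hQP fun hPQ => hr Q hQ hVQ (hPQ hrP)
    calc ((m + 1 : ℕ) : ℕ∞) = m + 1 := Nat.cast_succ m
      _ ≤ Q.height + 1 := by gcongr; exact hf Q hQ_prime hQ.1.2 hVQ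
      _ ≤ P.height := Ideal.height_add_one_le_of_lt_of_isPrime hQP_lt

lemma exists_fin_finite_setOf_isPrime {n : ℕ} (hdim : ringKrullDim R ≤ n) (V : Submodule K R) :
    ∃ f : Fin n → R, (∀ i, f i ∈ V) ∧
      {P : Ideal R | P.IsPrime ∧ Ideal.span (Set.range f) ≤ P ∧
        ¬ V ≤ P.restrictScalars K}.Finite := by
  obtain ⟨f, hfV, hf⟩ := exists_fin_forall_isPrime_le_height V n
  refine ⟨f, hfV, ((Ideal.span (Set.range f)).finite_minimalPrimes_of_isNoetherianRing R).subset ?_⟩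
  rintro P ⟨hP, hfP, hVP⟩
  obtain ⟨Q, hQ, hQP⟩ := Ideal.exists_minimalPrimes_le hfP
  have hQ_prime : Q.IsPrime := hQ.1.1
  have hn_le : (n : ℕ∞) ≤ Q.height := hf Q hQ_prime hQ.1.2 fun hVQ => hVP (hVQ.trans hQP)
  have hP_le : P.height ≤ n := by
    exact_mod_cast Ideal.height_le_ringKrullDim_of_isPrime.trans hdim
  have hQP_eq : Q = P := hQP.eq_of_not_lt fun hlt =>
    (Ideal.height_strict_mono_of_isPrime hlt).not_ge (hP_le.trans hn_le)
  exact hQP_eq ▸ hQ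

end Noetherian

section Field

variable {F : Type*} [Field F] {n : ℕ}

lemma vanishingIdeal_singleton_injective {σ : Type*} :
    Function.Injective fun x : σ → F => vanishingIdeal F {x} := by
  intro x y hxy
  funext i
  have hmem : X i - C (x i) ∈ vanishingIdeal F {x} := by simp
  rw [show vanishingIdeal F {x} = vanishingIdeal F {y} from hxy] at hmem
  simpa [mem_vanishingIdeal_singleton_iff, sub_eq_zero, eq_comm] using hmem

lemma mem_zeroSet_iff_range_subset {k : ℕ} {g : Fin k → MvPolynomial (Fin n) F} {x : Fin n → F} :
    x ∈ zeroSet g ↔ Set.range g ⊆ vanishingIdeal F {x} := by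
  simp [zeroSet, Set.range_subset_iff, aeval_eq_eval]

theorem square_system_reduction_general (K : Type*) [Field K] [Infinite K] [Algebra K F] {k : ℕ}
    (g : Fin k → MvPolynomial (Fin n) F) :
    ∃ a : Fin n → Fin k → K, ∃ S : Set (Fin n → F), S.Finite ∧
      zeroSet (fun i => ∑ j, C (algebraMap K F (a i j)) * g j) = zeroSet g ∪ S := by
  have hdim : ringKrullDim (MvPolynomial (Fin n) F) ≤ n := by simp
  obtain ⟨f, hfV, hfin⟩ :=
    exists_fin_finite_setOf_isPrime hdim (Submodule.span K (Set.range g))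
  choose a ha using fun i => (Submodule.mem_span_range_iff_exists_fun K).mp (hfV i)
  have hcomb : (fun i => ∑ j, C (algebraMap K F (a i j)) * g j) = f := by
    simp only [← smul_eq_C_mul, algebraMap_smul]
    exact funext ha
  have hspan (x : Fin n → F) : x ∈ zeroSet g ↔
      Submodule.span K (Set.range g) ≤ (vanishingIdeal F {x}).restrictScalars K := by
    rw [mem_zeroSet_iff_range_subset, Submodule.span_le, Submodule.coe_restrictScalars]
  have hsub : zeroSet g ⊆ zeroSet f := fun x hx =>
    mem_zeroSet_iff_range_subset.mpr (Set.range_subset_iff.mpr fun i => (hspan x).mp hx (hfV i))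
  refine ⟨a, zeroSet f \ zeroSet g, ?_, hcomb ▸ (Set.union_sdiff_cancel hsub).symm⟩
  refine (hfin.preimage vanishingIdeal_singleton_injective.injOn).subset fun x ⟨hxf, hxg⟩ => ?_
  exact ⟨inferInstance, Ideal.span_le.mpr (mem_zeroSet_iff_range_subset.mp hxf),
    mt (hspan x).mpr hxg⟩

end Field

/-- **Lemma (reduction to square systems).** For any polynomials `g₁, …, g_k` over `ℂ_p` in
`n` variables, there is an `n × k` matrix `(a_{ij})` with entries in `ℚ_p` such that the zero
set in `ℂ_pⁿ` of the square system `(∑_j a_{1j}·g_j, …, ∑_j a_{nj}·g_j)` is the union of the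
zero set of `(g₁, …, g_k)` and a finite (possibly empty) set of points.  Here `Cp` is any
field satisfying the characterizing axioms of `ℂ_p`. -/
theorem square_system_reduction (p : ℕ) [Fact p.Prime]
    (Cp : Type) [NormedField Cp] [IsUltrametricDist Cp]
    [CompleteSpace Cp] [IsAlgClosed Cp] [Algebra ℚ_[p] Cp]
    (hiso : Isometry (algebraMap ℚ_[p] Cp))
    (hdense : Dense {x : Cp | IsAlgebraic ℚ_[p] x})
    (k n : ℕ) (g : Fin k → MvPolynomial (Fin n) Cp) :
    ∃ a : Fin n → Fin k → ℚ_[p], ∃ S : Set (Fin n → Cp), S.Finite ∧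
      zeroSet (fun i => ∑ j, MvPolynomial.C (algebraMap ℚ_[p] Cp (a i j)) * g j) =
        zeroSet g ∪ S := by
  have : Infinite ℚ_[p] := CharZero.infinite _
  exact square_system_reduction_general ℚ_[p] g
end

section
/- Suppose β' : ℕ × ℕ → ℕ is such that for every prime p and every n×n m-sparse polynomial system H over ℂ_p, the number of isolated roots z = (z_1,…,z_n) ∈ ℂ_p^n of H satisfying |z_i − 1|_p ≤ 1/p for all i is at most β'(n,m). Then for every prime p, every degree-d algebraic extension L of ℚ_p with residue field degree f_L, every n×n m-sparse polynomial system G over L, and every fixed vector v ∈ ℝ^n, the number of isolated roots x = (x_1,…,x_n) of G in (L^*)^n with (ord_p x_1,…,ord_p x_n) = v is at most p^{dn}·(1 − 1/p^{f_L})^n·β'(n,m). -/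
/-!
Let `A` be the valuation ring of `L`. Fix one root `ζ₀` with valuation vector `v`; for every other
such root `ζ` the quotients `ζᵢ / ζ₀ᵢ` are units of `A`, so they define a class in `((A / pA)ˣ)ⁿ`.
Two roots `ζ`, `ξ` in the same class satisfy `|ζᵢ / ξᵢ - 1| ≤ 1 / p`, so rescaling the variables by
`ξ` moves the whole class into the polydisc around `(1, …, 1)`, where the hypothesis bounds the
number of roots; rescaling does not change supports.

It remains to count `(A / pA)ˣ`. Since `A` is torsion-free over `ℤ_p`, elements of `A` whose classes
are independent in `A / pA` are independent over `ℚ_p`, so `|A / pA| ≤ p ^ d`. If `ϖ ^ e` is a unit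
times `p`, then `|A / pA| = |A / ϖA| ^ e`, so the residue field of `A` has at most `p ^ f` elements,
and the units of `A / pA` are the elements with nonzero residue.
-/

open MvPolynomial Filter Topology

/-- The property that `β' : ℕ × ℕ → ℕ` bounds (independently of the prime `p`) the number of
isolated roots `x ∈ ℂ_pⁿ` of an `n × n` `m`-sparse polynomial system over `ℂ_p` satisfying
`|xᵢ - 1|_p ≤ 1/p` for all `i`.  Here `Cp` ranges over all fields satisfying the
characterizing axioms of `ℂ_p`. -/
def LipshitzBound (β' : ℕ × ℕ → ℕ) : Prop :=
  ∀ (p : ℕ) (_ : Fact p.Prime)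
    (Cp : Type) (_ : NormedField Cp) (_ : IsUltrametricDist Cp)
    (_ : CompleteSpace Cp) (_ : IsAlgClosed Cp) (_ : Algebra ℚ_[p] Cp)
    (_ : Isometry (algebraMap ℚ_[p] Cp))
    (_ : Dense {x : Cp | IsAlgebraic ℚ_[p] x})
    (n m : ℕ) (G : Fin n → MvPolynomial (Fin n) Cp), IsSparseSystem G m →
      {x : Fin n → Cp | IsIsolatedRoot G x ∧ ∀ i, ‖x i - 1‖ ≤ 1 / (p : ℝ)}.Finite ∧
      ({x : Fin n → Cp | IsIsolatedRoot G x ∧ ∀ i, ‖x i - 1‖ ≤ 1 / (p : ℝ)}.ncard : ℝ) ≤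
        β' (n, m)



/-- The `p`-adic valuation `ord_p x = -log_p |x|_p` of a nonzero element of a normed field. -/
noncomputable def ordp (p : ℕ) {F : Type*} [NormedField F] (x : F) : ℝ :=
  -Real.logb p ‖x‖

open scoped TensorProduct

section Residue

open IsLocalRing

lemma rank_residueField_tensorProduct_le (R K : Type*) {M V : Type*} [CommRing R] [IsLocalRing R]
    [Field K] [Algebra R K] [IsFractionRing R K] [AddCommGroup M] [Module R M] [Module.Flat R M]
    [AddCommGroup V] [Module R V] [Module K V] [IsScalarTower R K V] [FiniteDimensional K V]
    {g : M →ₗ[R] V} (hg : Function.Injective g) :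
    Module.rank (ResidueField R) (ResidueField R ⊗[R] M) ≤ Module.finrank K V := by
  refine rank_le fun s hs => ?_
  choose lift hlift using TensorProduct.mk_surjective R M (ResidueField R) residue_surjective
  have hlift_indep : LinearIndependent R fun i : s => lift i :=
    Module.IsLocalRing.linearIndependent_of_flat _ <| by
      simpa only [Function.comp_def, hlift] using hs
  have hindep : LinearIndependent K fun i : s => g (lift i) :=
    (LinearIndependent.iff_fractionRing R K).1 (hlift_indep.map' g (LinearMap.ker_eq_bot.2 hg))
  simpa using hindep.fintype_card_le_finrank

lemma finite_and_card_quotient_map_maximalIdeal_le (R K : Type*) {B L : Type*} [CommRing R]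
    [IsLocalRing R] [Finite (ResidueField R)] [Field K] [Algebra R K] [IsFractionRing R K]
    [CommRing B] [Algebra R B] [Module.Flat R B] [Ring L] [Algebra R L] [Algebra K L]
    [IsScalarTower R K L] [FiniteDimensional K L] {g : B →ₐ[R] L} (hg : Function.Injective g) :
    Finite (B ⧸ (maximalIdeal R).map (algebraMap R B)) ∧
      Nat.card (B ⧸ (maximalIdeal R).map (algebraMap R B)) ≤
        Nat.card (ResidueField R) ^ Module.finrank K L := by
  have hrank := rank_residueField_tensorProduct_le R K (g := g.toLinearMap) hg
  have : Module.Finite (ResidueField R) (ResidueField R ⊗[R] B) :=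
    Module.rank_lt_aleph0_iff.1 (hrank.trans_lt Cardinal.natCast_lt_aleph0)
  let e := (Algebra.TensorProduct.quotIdealMapEquivQuotTensor B (maximalIdeal R)).toEquiv
  have : Finite (ResidueField R ⊗[R] B) := Module.finite_of_finite (ResidueField R)
  refine ⟨.of_equiv (ResidueField R ⊗[R] B) e.symm, ?_⟩
  rw [Nat.card_congr e]
  refine (Module.natCard_eq_pow_finrank (K := ResidueField R) (V := ResidueField R ⊗[R] B)).trans_le
    (Nat.pow_le_pow_right Nat.card_pos (Module.finrank_le_of_rank_le hrank))

lemma card_quotient_span_singleton_mul {R : Type*} [CommRing R] {a : R} (ha : a ∈ nonZeroDivisors R)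
    (J : Ideal R) : Nat.card (R ⧸ Ideal.span {a} * J) =
      Nat.card (R ⧸ Ideal.span {a}) * Nat.card (R ⧸ J) := by
  let mulLeft : R →+ R := AddMonoidHom.mulLeft a
  have hinj : Function.Injective mulLeft := fun _ _ => (mul_cancel_left_mem_nonZeroDivisors ha).1
  have hmap (I : Ideal R) : I.toAddSubgroup.map mulLeft = (Ideal.span {a} * I).toAddSubgroup :=
    AddSubgroup.ext fun _ => Ideal.mem_span_singleton_mul.symm
  have hrel := AddSubgroup.relIndex_map_map_of_injective J.toAddSubgroup
    (⊤ : Ideal R).toAddSubgroup hinj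
  rw [hmap, hmap, Ideal.mul_top, Submodule.top_toAddSubgroup,
    AddSubgroup.relIndex_top_right] at hrel
  have hle : (Ideal.span {a} * J).toAddSubgroup ≤ (Ideal.span {a}).toAddSubgroup :=
    Ideal.mul_le_left
  have hindex := AddSubgroup.relIndex_mul_index hle
  rw [hrel, mul_comm] at hindex
  exact hindex.symm

lemma card_quotient_span_singleton_pow {R : Type*} [CommRing R] {a : R}
    (ha : a ∈ nonZeroDivisors R) (e : ℕ) :
    Nat.card (R ⧸ Ideal.span {a} ^ e) = Nat.card (R ⧸ Ideal.span {a}) ^ e := by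
  induction e with
  | zero => simp [Ideal.one_eq_top]
  | succ e ih => rw [pow_succ', card_quotient_span_singleton_mul ha, ih, pow_succ']

lemma card_units_of_surjective {S k : Type*} [Ring S] [Finite S] [DivisionRing k] {f : S →+* k}
    [IsLocalHom f] (hf : Function.Surjective f) :
    (Nat.card Sˣ : ℝ) = Nat.card S * (1 - 1 / Nat.card k) := by
  have : Finite k := .of_surjective f hf
  have hunits : Set.range (Units.val : Sˣ → S) = (f.toAddMonoidHom.ker : Set S)ᶜ := by
    ext x
    exact (isUnit_map_iff f x).symm.trans isUnit_iff_ne_zero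
  have hsplit : Nat.card f.toAddMonoidHom.ker + Nat.card Sˣ = Nat.card S := by
    rw [← Nat.card_range_of_injective Units.val_injective, hunits]
    exact Set.ncard_add_ncard_compl (f.toAddMonoidHom.ker : Set S)
  have hker : Nat.card f.toAddMonoidHom.ker * Nat.card k = Nat.card S := by
    rw [← AddSubgroup.card_mul_index f.toAddMonoidHom.ker, AddSubgroup.index_ker,
      AddMonoidHom.range_eq_top.2 hf, AddSubgroup.card_top]
  have hk : (Nat.card k : ℝ) ≠ 0 := Nat.cast_ne_zero.2 Nat.card_pos.ne'
  rw [← hker] at hsplit ⊢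
  push_cast [← Nat.cast_inj (R := ℝ)] at hsplit ⊢
  field_simp
  linarith

lemma card_units_quotient_span_singleton_pow_le {R : Type*} [CommRing R] [IsLocalRing R] {a : R}
    (ha : a ∈ nonZeroDivisors R) (ha_unit : ¬IsUnit a) {e Q : ℕ} (he : e ≠ 0)
    [Finite (R ⧸ Ideal.span {a} ^ e)] (hQ : Nat.card (R ⧸ Ideal.span {a} ^ e) ≤ Q ^ e) :
    (Nat.card (R ⧸ Ideal.span {a} ^ e)ˣ : ℝ) ≤ (Q : ℝ) ^ e * (1 - 1 / Q) := by
  have hpow : Ideal.span {a} ^ e ≤ Ideal.span {a} := Ideal.pow_le_self he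
  have hmax : Ideal.span {a} ≤ maximalIdeal R := by
    rwa [Ideal.span_singleton_le_iff_mem, mem_maximalIdeal]
  let f : R ⧸ Ideal.span {a} ^ e →+* ResidueField R := Ideal.Quotient.factor (hpow.trans hmax)
  have hf : Function.Surjective f := Ideal.Quotient.factor_surjective _
  have : Nontrivial (R ⧸ Ideal.span {a} ^ e) := RingHom.domain_nontrivial f
  have : IsLocalRing (R ⧸ Ideal.span {a} ^ e) :=
    .of_surjective' (Ideal.Quotient.mk _) Ideal.Quotient.mk_surjective
  have : IsLocalHom f := .of_surjective f hf
  have : Finite (R ⧸ Ideal.span {a}) := .of_surjective _ (Ideal.Quotient.factor_surjective hpow)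
  have : Finite (ResidueField R) := .of_surjective f hf
  have hresidue : Nat.card (ResidueField R) ≤ Q :=
    (Nat.card_le_card_of_surjective _ (Ideal.Quotient.factor_surjective hmax)).trans
      ((Nat.pow_le_pow_iff_left he).1 (card_quotient_span_singleton_pow ha e ▸ hQ))
  have hpos : (0 : ℝ) < Nat.card (ResidueField R) := Nat.cast_pos.2 Nat.card_pos
  rw [card_units_of_surjective hf]
  gcongr
  · rw [sub_nonneg, div_le_one hpos]
    exact Nat.one_le_cast.2 Nat.card_pos
  · exact mod_cast hQ
end Residue

lemma enatCard_le_card_mul {α β : Type*} [Finite β] (f : α → β) {B : ℕ∞}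
    (hf : ∀ a, (f ⁻¹' {f a}).encard ≤ B) : ENat.card α ≤ Nat.card β * B := by
  have := Fintype.ofFinite β
  have hfibre : ∀ b, (f ⁻¹' {b}).encard ≤ B := fun b => by
    by_cases hb : b ∈ Set.range f
    · obtain ⟨a, rfl⟩ := hb
      exact hf a
    · simp [Set.preimage_singleton_eq_empty.2 hb]
  calc ENat.card α = (⋃ b, f ⁻¹' {b}).encard := by
        rw [← Set.preimage_iUnion, Set.iUnion_of_singleton, Set.preimage_univ, Set.encard_univ]
    _ ≤ ∑ b, (f ⁻¹' {b}).encard := Set.encard_iUnion_le_of_fintype _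
    _ ≤ ∑ _ : β, B := Finset.sum_le_sum fun b _ => hfibre b
    _ = Nat.card β * B := by simp

section Valuation

open IsLocalRing

variable {L Γ₀ : Type*} [Field L] [LinearOrderedCommGroupWithZero Γ₀] {w : Valuation L Γ₀}

lemma valuationSubring_dvd_iff {x y : w.valuationSubring} : x ∣ y ↔ w y ≤ w x :=
  (Valuation.valuationSubring.integers w).dvd_iff_le

lemma valuationSubring_isUnit_iff {x : w.valuationSubring} : IsUnit x ↔ w x = 1 :=
  (Valuation.valuationSubring.integers w).isUnit_iff_valuation_eq_one

lemma valuationSubring_associated_iff {x y : w.valuationSubring} : Associated x y ↔ w x = w y := by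
  rw [← dvd_dvd_iff_associated, valuationSubring_dvd_iff, valuationSubring_dvd_iff, le_antisymm_iff,
    and_comm]

lemma finite_and_card_valuationSubring_quotient_span_p_le {p : ℕ} [Fact p.Prime] [Algebra ℚ_[p] L]
    [FiniteDimensional ℚ_[p] L] (hw : ∀ x : ℤ_[p], w (algebraMap ℚ_[p] L x) ≤ 1) :
    Finite (w.valuationSubring ⧸ Ideal.span {(p : w.valuationSubring)}) ∧
      Nat.card (w.valuationSubring ⧸ Ideal.span {(p : w.valuationSubring)}) ≤
        p ^ Module.finrank ℚ_[p] L := by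
  let _ : Algebra ℤ_[p] L := .compHom L (algebraMap ℤ_[p] ℚ_[p])
  have : IsScalarTower ℤ_[p] ℚ_[p] L := .of_algebraMap_eq' rfl
  let _ : Algebra ℤ_[p] w.valuationSubring :=
    ((algebraMap ℤ_[p] L).codRestrict w.valuationSubring hw).toAlgebra
  let g : w.valuationSubring →ₐ[ℤ_[p]] L := ⟨w.valuationSubring.subtype, fun _ => rfl⟩
  have hg : Function.Injective g := Subtype.val_injective
  have : Module.IsTorsionFree ℤ_[p] w.valuationSubring :=
    have : Module.IsTorsionFree ℤ_[p] L := .trans ℚ_[p]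
    hg.moduleIsTorsionFree g (map_smul g)
  have : Finite (ResidueField ℤ_[p]) := .of_equiv _ PadicInt.residueField.symm.toEquiv
  simpa only [PadicInt.maximalIdeal_eq_span_p, Ideal.map_span, Set.image_singleton, map_natCast,
    Nat.card_congr PadicInt.residueField.toEquiv, Nat.card_zmod] using
    finite_and_card_quotient_map_maximalIdeal_le ℤ_[p] ℚ_[p] hg

lemma valuation_div_sub_one_le_of_mk_eq {c : w.valuationSubring} {u v : w.valuationSubringˣ}
    (h : Ideal.Quotient.mk (Ideal.span {c}) u = Ideal.Quotient.mk (Ideal.span {c}) v) :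
    w ((u : L) / v - 1) ≤ w c := by
  have hv : w v = 1 := valuationSubring_isUnit_iff.1 v.isUnit
  have hv₀ : (v : L) ≠ 0 := by simp [← w.ne_zero_iff, hv]
  rw [Ideal.Quotient.eq, Ideal.mem_span_singleton, valuationSubring_dvd_iff] at h
  simpa [div_sub_one hv₀, hv] using h

lemma encard_le_card_units_pow_mul {ι : Type*} [Fintype ι] {c : w.valuationSubring}
    [Finite (w.valuationSubring ⧸ Ideal.span {c})] {S : Set (ι → L)} {B : ℕ∞}
    (hS₀ : ∀ ζ ∈ S, ∀ i, ζ i ≠ 0) (hS : ∀ ζ ∈ S, ∀ ξ ∈ S, ∀ i, w (ζ i) = w (ξ i))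
    (hB : ∀ ξ ∈ S, {ζ ∈ S | ∀ i, w (ζ i / ξ i - 1) ≤ w c}.encard ≤ B) :
    S.encard ≤ (Nat.card (w.valuationSubring ⧸ Ideal.span {c})ˣ ^ Fintype.card ι : ℕ) * B := by
  rcases S.eq_empty_or_nonempty with rfl | ⟨ζ₀, hζ₀⟩
  · simp
  have hunit : ∀ (ζ : S) i, ∃ u : w.valuationSubringˣ, (u : L) = ζ.1 i / ζ₀ i := fun ζ i => by
    have hw : w (ζ.1 i / ζ₀ i) = 1 := by
      rw [map_div₀, hS _ ζ.2 _ hζ₀, div_self (w.ne_zero_iff.2 (hS₀ _ hζ₀ i))]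
    exact ⟨(valuationSubring_isUnit_iff (x := ⟨_, hw.le⟩).2 hw).unit, rfl⟩
  choose u hu using hunit
  let residueClass (ζ : S) (i : ι) : (w.valuationSubring ⧸ Ideal.span {c})ˣ :=
    Units.map (Ideal.Quotient.mk _).toMonoidHom (u ζ i)
  have hclose (ζ ξ : S) (h : residueClass ζ = residueClass ξ) (i : ι) :
      w (ζ.1 i / ξ.1 i - 1) ≤ w c := by
    rw [← div_div_div_cancel_right₀ (hS₀ _ hζ₀ i), ← hu, ← hu]
    exact valuation_div_sub_one_le_of_mk_eq (congrArg Units.val (congrFun h i))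
  have hfibre (ξ : S) : (residueClass ⁻¹' {residueClass ξ}).encard ≤ B := by
    rw [← Subtype.val_injective.encard_image]
    refine (Set.encard_le_encard ?_).trans (hB ξ ξ.2)
    rintro _ ⟨ζ, hζ, rfl⟩
    exact ⟨ζ.2, hclose ζ ξ hζ⟩
  have := enatCard_le_card_mul residueClass hfibre
  rwa [Nat.card_fun, Nat.card_eq_fintype_card (α := ι)] at this

lemma card_units_valuationSubring_quotient_span_p_le {p e f : ℕ} [Fact p.Prime] [Algebra ℚ_[p] L]
    [FiniteDimensional ℚ_[p] L] (hw : ∀ x : ℤ_[p], w (algebraMap ℚ_[p] L x) ≤ 1)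
    (hp : w p ≠ 1) (hef : e * f = Module.finrank ℚ_[p] L) {ϖ : L} (hϖ : w ϖ ^ e = w p) :
    (Nat.card (w.valuationSubring ⧸ Ideal.span {(p : w.valuationSubring)})ˣ : ℝ) ≤
      (p : ℝ) ^ Module.finrank ℚ_[p] L * (1 - 1 / (p : ℝ) ^ f) := by
  have he : e ≠ 0 := left_ne_zero_of_mul (hef.trans_ne Module.finrank_pos.ne')
  have : CharZero L := charZero_of_injective_algebraMap (algebraMap ℚ_[p] L).injective
  have hp₀ : w p ≠ 0 := w.ne_zero_iff.2 (Nat.cast_ne_zero.2 (Fact.out : p.Prime).ne_zero)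
  have hϖ_mem : w ϖ ≤ 1 := by
    rw [← pow_le_one_iff_of_nonneg zero_le he, hϖ]
    exact (p : w.valuationSubring).2
  let π : w.valuationSubring := ⟨ϖ, hϖ_mem⟩
  have hπ₀ : π ≠ 0 := by
    intro h
    have : ϖ = 0 := congrArg Subtype.val h
    exact hp₀ (by rw [← hϖ, this, map_zero, zero_pow he])
  have hπ : ¬IsUnit π := fun h =>
    hp (by rw [← hϖ, valuationSubring_isUnit_iff.1 h, one_pow])
  have hspan : Ideal.span {(p : w.valuationSubring)} = Ideal.span {π} ^ e := by
    rw [Ideal.span_singleton_pow, Ideal.span_singleton_eq_span_singleton,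
      valuationSubring_associated_iff]
    simpa [π] using hϖ.symm
  have hquot := finite_and_card_valuationSubring_quotient_span_p_le hw
  rw [hspan, ← hef, mul_comm, pow_mul] at hquot
  have := hquot.1
  rw [hspan, ← hef, mul_comm e, pow_mul]
  simpa only [Nat.cast_pow] using card_units_quotient_span_singleton_pow_le
    (mem_nonZeroDivisors_of_ne_zero hπ₀) hπ he hquot.2

end Valuation

section Rescaling

/-- The substitution `P(x₁, …, xₙ) ↦ P(a₁x₁, …, aₙxₙ)`, which carries the roots of `P` near `a` to
roots near `(1, …, 1)`. -/
noncomputable def scaleVars {σ R : Type*} [CommSemiring R] (a : σ → R) :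
    MvPolynomial σ R →ₐ[R] MvPolynomial σ R :=
  bind₁ fun i => C (a i) * X i

lemma eval_scaleVars {σ R : Type*} [CommSemiring R] (a x : σ → R) (P : MvPolynomial σ R) :
    eval x (scaleVars a P) = eval (a * x) P := by
  rw [scaleVars, ← coe_aeval_eq_eval, ← coe_aeval_eq_eval]
  simp only [RingHom.coe_coe, aeval_bind₁]
  congr 1
  ext i
  simp

lemma scaleVars_monomial {σ R : Type*} [CommSemiring R] (a : σ → R) (s : σ →₀ ℕ) (c : R) :
    scaleVars a (monomial s c) = monomial s (c * s.prod fun i k => a i ^ k) := by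
  rw [scaleVars, bind₁_monomial, monomial_eq (s := s)]
  simp [Finsupp.prod, mul_pow, Finset.prod_mul_distrib, mul_assoc]

lemma coeff_scaleVars {σ R : Type*} [CommSemiring R] (a : σ → R) (P : MvPolynomial σ R)
    (s : σ →₀ ℕ) : coeff s (scaleVars a P) = coeff s P * s.prod fun i k => a i ^ k := by
  classical
  induction P using MvPolynomial.induction_on' with
  | monomial u c =>
    rw [scaleVars_monomial, coeff_monomial, coeff_monomial]
    split_ifs with h
    · rw [h]
    · rw [zero_mul]
  | add P Q hP hQ => rw [map_add, coeff_add, coeff_add, hP, hQ, add_mul]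

lemma support_scaleVars {σ R : Type*} [CommSemiring R] [NoZeroDivisors R] [Nontrivial R] {a : σ → R}
    (ha : ∀ i, a i ≠ 0) (P : MvPolynomial σ R) : (scaleVars a P).support = P.support := by
  ext s
  have hs : s.prod (fun i k => a i ^ k) ≠ 0 :=
    Finset.prod_ne_zero_iff.2 fun i _ => pow_ne_zero _ (ha i)
  rw [mem_support_iff, mem_support_iff, coeff_scaleVars, mul_ne_zero_iff_right hs]

lemma IsSparseSystem.congr_support {R S : Type*} [CommSemiring R] [CommSemiring S] {k n m : ℕ}
    {G : Fin k → MvPolynomial (Fin n) R} {H : Fin k → MvPolynomial (Fin n) S}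
    (hG : IsSparseSystem G m) (h : ∀ i, (H i).support = (G i).support) : IsSparseSystem H m := by
  refine ⟨fun i => ?_, by simpa only [h] using hG.2⟩
  rw [← support_nonempty, h, support_nonempty]
  exact hG.1 i

lemma mem_zeroSet_scaleVars {F : Type*} [CommSemiring F] {k n : ℕ} {a x : Fin n → F}
    {G : Fin k → MvPolynomial (Fin n) F} :
    x ∈ zeroSet (fun i => scaleVars a (G i)) ↔ a * x ∈ zeroSet G :=
  forall_congr' fun i => by rw [eval_scaleVars]

lemma IsIsolatedRoot.scaleVars {F : Type*} [NormedField F] {k n : ℕ} {a x : Fin n → F}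
    (ha : ∀ i, a i ≠ 0) {G : Fin k → MvPolynomial (Fin n) F} (h : IsIsolatedRoot G (a * x)) :
    IsIsolatedRoot (fun i => scaleVars a (G i)) x := by
  refine ⟨mem_zeroSet_scaleVars.2 h.1, ?_⟩
  have hisolated := h.2
  rw [← notMem_closure_iff_nhdsWithin_eq_bot] at hisolated ⊢
  refine fun hx => hisolated (map_mem_closure (continuous_const_mul a) hx fun z hz => ?_)
  refine ⟨mem_zeroSet_scaleVars.1 hz.1, fun heq => hz.2 (funext fun i => ?_)⟩
  exact mul_left_cancel₀ (ha i) (congrFun heq i)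

end Rescaling

section Counting

/-- Every `m`-sparse system of `k` polynomials in `n` variables over `K` has at most `B` isolated
roots in the closed polydisc of radius `r` around `(1, …, 1)`. For `K = ℂ_p`, `k = n` and
`r = 1 / p` this is what `LipshitzBound` provides. -/
def HasRootBoundNearOne (K : Type*) [NormedField K] (k n m : ℕ) (r : ℝ) (B : ℕ∞) : Prop :=
  ∀ G : Fin k → MvPolynomial (Fin n) K, IsSparseSystem G m →
    {x | IsIsolatedRoot G x ∧ ∀ i, ‖x i - 1‖ ≤ r}.encard ≤ B

lemma HasRootBoundNearOne.encard_near_le {K L : Type*} [NormedField K] [Field L] {k n m : ℕ} {r : ℝ}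
    {B : ℕ∞} (hB : HasRootBoundNearOne K k n m r B) (φ : L →+* K)
    {G : Fin k → MvPolynomial (Fin n) L} (hG : IsSparseSystem G m) {ξ : Fin n → L}
    (hξ : ∀ i, ξ i ≠ 0) :
    {ζ : Fin n → L | IsIsolatedRoot (fun i => (G i).map φ) (fun j => φ (ζ j)) ∧
      ∀ i, ‖φ (ζ i / ξ i - 1)‖ ≤ r}.encard ≤ B := by
  have hφξ : ∀ i, φ (ξ i) ≠ 0 := fun i => (map_ne_zero φ).2 (hξ i)
  have hsparse : IsSparseSystem (fun i => scaleVars (fun j => φ (ξ j)) ((G i).map φ)) m :=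
    hG.congr_support fun i => by
      rw [support_scaleVars hφξ, support_map_of_injective _ φ.injective]
  refine le_trans ?_ (hB _ hsparse)
  refine Set.encard_le_encard_of_injOn (f := fun ζ i => φ (ζ i / ξ i)) ?_ ?_
  · rintro ζ ⟨hζ, hnear⟩
    refine ⟨.scaleVars hφξ ?_, fun i => by simpa using hnear i⟩
    convert hζ using 2 with j
    simp [mul_div_cancel₀ _ (hφξ j)]
  · intro ζ _ η _ h
    exact funext fun i => (div_left_inj' (hξ i)).1 (φ.injective (congrFun h i))

lemma norm_eq_of_ordp_eq (p : ℕ) [Fact p.Prime] {F : Type*} [NormedField F] {x y : F} (hx : x ≠ 0)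
    (hy : y ≠ 0) (h : ordp p x = ordp p y) : ‖x‖ = ‖y‖ :=
  Real.logb_injOn_pos (Nat.one_lt_cast.2 (Fact.out : p.Prime).one_lt) (norm_pos_iff.2 hx)
    (norm_pos_iff.2 hy) (neg_injective h)

theorem fixed_valuation_bound_from_lipshitz_general {p : ℕ} [Fact p.Prime] {K L : Type*}
    [NormedField K] [IsUltrametricDist K] [Algebra ℚ_[p] K]
    (hiso : Isometry (algebraMap ℚ_[p] K)) [Field L] [Algebra ℚ_[p] L] [Algebra L K]
    [IsScalarTower ℚ_[p] L K] [FiniteDimensional ℚ_[p] L] {e f : ℕ}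
    (hef : e * f = Module.finrank ℚ_[p] L) {ϖ : L} (hϖ : ‖algebraMap L K ϖ‖ ^ e = 1 / p)
    {k n m B : ℕ} (hB : HasRootBoundNearOne K k n m (1 / p) B)
    {G : Fin k → MvPolynomial (Fin n) L} (hG : IsSparseSystem G m) (v : Fin n → ℝ) :
    {ζ : Fin n → L | (∀ i, ζ i ≠ 0) ∧
        IsIsolatedRoot (fun i => (G i).map (algebraMap L K)) (fun j => algebraMap L K (ζ j)) ∧
        ∀ i, ordp p (algebraMap L K (ζ i)) = v i}.Finite ∧
    ({ζ : Fin n → L | (∀ i, ζ i ≠ 0) ∧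
        IsIsolatedRoot (fun i => (G i).map (algebraMap L K)) (fun j => algebraMap L K (ζ j)) ∧
        ∀ i, ordp p (algebraMap L K (ζ i)) = v i}.ncard : ℝ) ≤
      (p : ℝ) ^ (Module.finrank ℚ_[p] L * n) * (1 - 1 / (p : ℝ) ^ f) ^ n * B := by
  set S := {ζ : Fin n → L | (∀ i, ζ i ≠ 0) ∧
    IsIsolatedRoot (fun i => (G i).map (algebraMap L K)) (fun j => algebraMap L K (ζ j)) ∧
    ∀ i, ordp p (algebraMap L K (ζ i)) = v i}
  let w : Valuation L NNReal := NormedField.valuation.comap (algebraMap L K)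
  have hw (x : ℚ_[p]) : (w (algebraMap ℚ_[p] L x) : ℝ) = ‖x‖ := by
    have := hiso.norm_map_of_map_zero (map_zero _) x
    rwa [IsScalarTower.algebraMap_apply ℚ_[p] L K] at this
  have hwp : (w p : ℝ) = 1 / p := by
    rw [← map_natCast (algebraMap ℚ_[p] L), hw, Padic.norm_p, one_div]
  have hint (x : ℤ_[p]) : w (algebraMap ℚ_[p] L x) ≤ 1 := by
    rw [← NNReal.coe_le_coe, hw]
    exact x.2
  have hp : w p ≠ 1 := fun h => by
    rw [h, NNReal.coe_one, eq_comm, one_div, inv_eq_one] at hwp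
    exact (Fact.out : p.Prime).ne_one (Nat.cast_eq_one.1 hwp)
  have hϖp : w ϖ ^ e = w p := NNReal.eq (hϖ.trans hwp.symm)
  have := (finite_and_card_valuationSubring_quotient_span_p_le hint).1
  have hS_val : ∀ ζ ∈ S, ∀ ξ ∈ S, ∀ i, w (ζ i) = w (ξ i) := fun ζ hζ ξ hξ i =>
    NNReal.eq (norm_eq_of_ordp_eq p ((map_ne_zero _).2 (hζ.1 i)) ((map_ne_zero _).2 (hξ.1 i))
      ((hζ.2.2 i).trans (hξ.2.2 i).symm))
  have hS_near (ξ) (hξ : ξ ∈ S) :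
      {ζ ∈ S | ∀ i, w (ζ i / ξ i - 1) ≤ w (p : w.valuationSubring)}.encard ≤ B := by
    refine le_trans (Set.encard_le_encard ?_) (hB.encard_near_le (algebraMap L K) hG hξ.1)
    exact fun ζ ⟨hζ, hnear⟩ => ⟨hζ.2.1, fun i => (NNReal.coe_le_coe.2 (hnear i)).trans_eq hwp⟩
  have hcount := encard_le_card_units_pow_mul (fun ζ hζ => hζ.1) hS_val hS_near
  rw [Fintype.card_fin, ← Nat.cast_mul, Set.encard_le_coe_iff_finite_ncard_le] at hcount
  refine ⟨hcount.1, (Nat.cast_le.2 hcount.2).trans ?_⟩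
  rw [pow_mul, ← mul_pow, Nat.cast_mul, Nat.cast_pow]
  gcongr
  exact card_units_valuationSubring_quotient_span_p_le hint hp hef hϖp

end Counting

/-- **Key step in the proof of Theorem 1.** If `β'(n,m)` bounds the number of isolated roots
of `n × n` `m`-sparse systems over `ℂ_p` that are `p`-adically close to `(1,…,1)` (Lipshitz's
Theorem), then for any fixed `v ∈ ℝⁿ`, any `n × n` `m`-sparse system over a degree-`d`
extension `L` of `ℚ_p` has at most `p^{dn}·(1 - 1/p^{f_L})^n·β'(n,m)` isolated roots
`x ∈ (L*)ⁿ` with valuation vector `(ord_p x₁, …, ord_p xₙ) = v`. -/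
theorem fixed_valuation_bound_from_lipshitz (β' : ℕ × ℕ → ℕ) (hβ' : LipshitzBound β') :
    ∀ (p : ℕ) (_ : Fact p.Prime) (d : ℕ) (_ : 0 < d)
      (Cp : Type) (_ : NormedField Cp) (_ : IsUltrametricDist Cp)
      (_ : CompleteSpace Cp) (_ : IsAlgClosed Cp) (_ : Algebra ℚ_[p] Cp)
      (_ : Isometry (algebraMap ℚ_[p] Cp))
      (_ : Dense {x : Cp | IsAlgebraic ℚ_[p] x})
      (L : Type) (_ : Field L) (_ : Algebra ℚ_[p] L) (_ : Algebra L Cp)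
      (_ : IsScalarTower ℚ_[p] L Cp) (_ : FiniteDimensional ℚ_[p] L)
      (_ : Module.finrank ℚ_[p] L = d)
      (eL fL : ℕ) (_ : 0 < eL) (_ : eL * fL = d)
      (_ : ∀ x : L, x ≠ 0 → ∃ j : ℤ, ‖algebraMap L Cp x‖ = (p : ℝ) ^ ((j : ℝ) / (eL : ℝ)))
      (_ : ∃ x : L, x ≠ 0 ∧ ‖algebraMap L Cp x‖ = (p : ℝ) ^ (-(1 : ℝ) / (eL : ℝ)))
      (n m : ℕ) (G : Fin n → MvPolynomial (Fin n) L), IsSparseSystem G m →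
      ∀ v : Fin n → ℝ,
        {ζ : Fin n → L | (∀ i, ζ i ≠ 0) ∧
            IsIsolatedRoot (fun i => (G i).map (algebraMap L Cp))
              (fun j => algebraMap L Cp (ζ j)) ∧
            ∀ i, ordp p (algebraMap L Cp (ζ i)) = v i}.Finite ∧
        ({ζ : Fin n → L | (∀ i, ζ i ≠ 0) ∧
            IsIsolatedRoot (fun i => (G i).map (algebraMap L Cp))
              (fun j => algebraMap L Cp (ζ j)) ∧
            ∀ i, ordp p (algebraMap L Cp (ζ i)) = v i}.ncard : ℝ) ≤
          (p : ℝ) ^ (d * n) * (1 - 1 / (p : ℝ) ^ fL) ^ n * β' (n, m) := by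
  intro p _ d _ Cp _ _ _ _ _ hiso hdense L _ _ _ _ _ hd eL fL heL hef _ ⟨ϖ, _, hϖ⟩ n m G hG v
  subst hd
  have hϖe : ‖algebraMap L Cp ϖ‖ ^ eL = 1 / p := by
    rw [hϖ, ← Real.rpow_natCast, ← Real.rpow_mul (by positivity), div_mul_cancel₀ _ (by positivity),
      Real.rpow_neg_one, one_div]
  refine fixed_valuation_bound_from_lipshitz_general hiso hef hϖe (fun H hH => ?_) hG v
  obtain ⟨hfin, hcard⟩ := hβ' p inferInstance Cp inferInstance inferInstance inferInstance
    inferInstance inferInstance hiso hdense n m H hH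
  exact Set.encard_le_coe_iff_finite_ncard_le.2 ⟨hfin, mod_cast hcard⟩
end

section
/- Let p be a prime, fix an algebraic closure Ω of ℚ_p, and let N be a positive integer. Then the compositum inside Ω of all finite extensions of ℚ_p (contained in Ω) of degree at most N is itself a finite extension of ℚ_p. -/
/-!
By compactness of the unit ball of `K = ℚ_p` and continuity of roots, the set of `y ∈ Ω` with
`‖y‖ ≤ 1` and of degree at most `N²` over `K` is totally bounded. Hence, for every `δ > 0`, some
finite extension `E` of `K` comes within `δ` of each such `y`.

For `δ` small enough, depending only on `N`, such an `E` contains every `x` of degree at most `N`.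
Indeed, let `σ ∈ Gal(Ω/E)`. As `σ` permutes the at most `N` conjugates of `x`, the sum of the first
`N!` iterates of `z = σ x - x` under `σ` telescopes to `0`, so that
`N! • z = ∑ j < N!, ((z - b) - σ ^ j (z - b))` for each `b ∈ E`, whence `‖N! • z‖ ≤ ‖z - b‖`.
But `z` has degree at most `N²`, and if `z ≠ 0` we may scale `x` so that `‖z‖ ≤ 1` and `‖z‖` is
bounded below; then some `b ∈ E` is closer to `z` than `‖N! • z‖`, a contradiction. So `σ x = x`
for all `σ`.
-/

open Function IntermediateField Polynomial
open scoped Nat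

section FieldTheory

variable {K L : Type*} [Field K] [Field L] [Algebra K L]

lemma natDegree_minpoly_le_finrank_of_mem {F : IntermediateField K L} [FiniteDimensional K F]
    {x : L} (hx : x ∈ F) : (minpoly K x).natDegree ≤ Module.finrank K F :=
  (congrArg natDegree (F.minpoly_eq ⟨x, hx⟩)).symm.trans_le (minpoly.natDegree_le _)

lemma natDegree_minpoly_le_mul_of_mem_sup {x y z : L} (hx : IsIntegral K x) (hy : IsIntegral K y)
    (hz : z ∈ K⟮x⟯ ⊔ K⟮y⟯) :
    (minpoly K z).natDegree ≤ (minpoly K x).natDegree * (minpoly K y).natDegree := by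
  have := adjoin.finiteDimensional hx
  have := adjoin.finiteDimensional hy
  calc (minpoly K z).natDegree ≤ Module.finrank K ↥(K⟮x⟯ ⊔ K⟮y⟯) :=
        natDegree_minpoly_le_finrank_of_mem hz
    _ ≤ Module.finrank K K⟮x⟯ * Module.finrank K K⟮y⟯ := finrank_sup_le _ _
    _ = (minpoly K x).natDegree * (minpoly K y).natDegree := by
        rw [adjoin.finrank hx, adjoin.finrank hy]

lemma separable_of_irreducible_of_natDegree_cast_ne_zero {f : K[X]} (hf : Irreducible f)
    (hdeg : (f.natDegree : K) ≠ 0) : f.Separable := by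
  refine (separable_iff_derivative_ne_zero hf).2 fun hder => ?_
  have hcoeff : f.derivative.coeff (f.natDegree - 1) = f.leadingCoeff * f.natDegree := by
    obtain ⟨n, hn⟩ := Nat.exists_eq_succ_of_ne_zero hf.natDegree_pos.ne'
    rw [coeff_derivative, leadingCoeff, hn]
    simp
  exact mul_ne_zero (leadingCoeff_ne_zero.2 hf.ne_zero) hdeg (by rw [← hcoeff, hder, coeff_zero])

lemma isSeparable_of_natDegree_minpoly_le {N : ℕ} (hN : (N ! : K) ≠ 0) {x : L}
    (hx : IsIntegral K x) (hdeg : (minpoly K x).natDegree ≤ N) : IsSeparable K x := by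
  refine separable_of_irreducible_of_natDegree_cast_ne_zero (minpoly.irreducible hx) ?_
  exact ne_zero_of_dvd_ne_zero hN
    (Nat.cast_dvd_cast (Nat.dvd_factorial (minpoly.natDegree_pos hx) hdeg))

lemma isPeriodicPt_factorial_of_natDegree_minpoly_le (σ : L →ₐ[K] L) {N : ℕ} {x : L}
    (hx : IsIntegral K x) (hdeg : (minpoly K x).natDegree ≤ N) : IsPeriodicPt σ N ! x := by
  let roots := (minpoly K x).rootSet L
  have hmaps : Set.MapsTo σ roots roots := rootSet_mapsTo σ
  let x' : roots := ⟨x, mem_rootSet.2 ⟨minpoly.ne_zero hx, minpoly.aeval K x⟩⟩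
  have hper : x' ∈ periodicPts (hmaps.restrict σ roots roots) :=
    (hmaps.restrict_inj.2 σ.injective.injOn).mem_periodicPts x'
  have hcard : Fintype.card roots ≤ N := by
    rw [← Set.toFinset_card, ← Set.ncard_eq_toFinset_card']
    exact (ncard_rootSet_le _ _).trans hdeg
  exact ((isPeriodicPt_factorial_card_of_mem_periodicPts hper).trans_dvd
    (Nat.factorial_dvd_factorial hcard)).map (g := Subtype.val) fun _ => rfl

end FieldTheory

lemma norm_nsmul_map_sub_self_le {V : Type*} [SeminormedAddCommGroup V] [IsUltrametricDist V]
    {σ : V →+ V} (hσ : Isometry σ) {m : ℕ} {x b : V} (hx : IsPeriodicPt σ m x)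
    (hb : IsFixedPt σ b) : ‖m • (σ x - x)‖ ≤ ‖σ x - x - b‖ := by
  set z := σ x - x with hz
  have hsum : ∑ j ∈ Finset.range m, σ^[j] z = 0 := by
    simp only [hz, iterate_map_sub, ← iterate_succ_apply]
    rw [Finset.sum_range_sub (fun j => σ^[j] x), hx, iterate_zero_apply, sub_self]
  have hterm (j : ℕ) : z - σ^[j] z = (z - b) - σ^[j] (z - b) := by
    rw [iterate_map_sub σ j z b, (hb.iterate j).eq]
    abel
  have hnorm (j : ℕ) : ‖σ^[j] (z - b)‖ = ‖z - b‖ := by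
    induction j with
    | zero => rfl
    | succ j ih => rw [iterate_succ_apply', hσ.norm_map_of_map_zero (map_zero σ), ih]
  calc ‖m • z‖ = ‖∑ j ∈ Finset.range m, ((z - b) - σ^[j] (z - b))‖ := by
        simp only [← hterm]
        rw [Finset.sum_sub_distrib, hsum, Finset.sum_const, Finset.card_range, sub_zero]
    _ ≤ ‖z - b‖ := IsUltrametricDist.norm_sum_le_of_forall_le_of_nonneg (norm_nonneg _)
        fun j _ => by
          simpa only [sub_eq_add_neg, norm_neg, ← sub_eq_add_neg, hnorm, max_self] using
            IsUltrametricDist.norm_add_le_max (z - b) (-σ^[j] (z - b))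

lemma exists_finite_monic_norm_coeff_sub_lt (K : Type*) [NormedField K] [ProperSpace K] (n : ℕ)
    (r : ℝ) {ε : ℝ} (hε : 0 < ε) :
    ∃ P : Set K[X], P.Finite ∧ (∀ g ∈ P, g.Monic ∧ g.natDegree = n) ∧
      ∀ f : K[X], f.Monic → f.natDegree = n → (∀ i, ‖f.coeff i‖ ≤ r) →
        ∃ g ∈ P, ∀ i, ‖g.coeff i - f.coeff i‖ < ε := by
  classical
  obtain ⟨T, -, hTfin, hT⟩ :=
    finite_cover_balls_of_compact (isCompact_closedBall (0 : Fin n → K) r) hε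
  refine ⟨(fun v => X ^ n + ofFn n v) '' T, hTfin.image _, ?_, fun f hf hfn hfr => ?_⟩
  · rintro _ ⟨v, -, rfl⟩
    have hlt := ofFn_degree_lt v
    refine ⟨monic_X_pow_add hlt, ?_⟩
    rw [natDegree_add_eq_left_of_degree_lt (by rwa [degree_X_pow]), natDegree_X_pow]
  have hmem : toFn n f ∈ Metric.closedBall 0 r := by
    have hr : 0 ≤ r := (norm_nonneg _).trans (hfr 0)
    exact mem_closedBall_zero_iff.2 ((pi_norm_le_iff_of_nonneg hr).2 fun i => hfr i)
  obtain ⟨v, hvT, hv⟩ := Set.mem_iUnion₂.1 (hT hmem)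
  refine ⟨_, Set.mem_image_of_mem _ hvT, fun i => ?_⟩
  rcases lt_trichotomy i n with hi | rfl | hi
  · rw [coeff_add, coeff_X_pow, if_neg hi.ne, zero_add, ofFn_coeff_eq_val_of_lt v hi, norm_sub_rev,
      ← dist_eq_norm]
    exact (dist_pi_lt_iff hε).1 hv ⟨i, hi⟩
  · have hfi : f.coeff i = 1 := hfn ▸ hf.coeff_natDegree
    simpa [hfi, ofFn_coeff_eq_zero_of_ge v le_rfl] using hε
  · simpa [coeff_X_pow, hi.ne', ofFn_coeff_eq_zero_of_ge v hi.le,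
      coeff_eq_zero_of_natDegree_lt (hfn.trans_lt hi)] using hε

lemma exists_finiteDimensional_norm_sub_lt_of_totallyBounded {K L : Type*} [Field K]
    [NormedField L] [Algebra K L] [Algebra.IsAlgebraic K L] {s : Set L} (hs : TotallyBounded s)
    {δ : ℝ} (hδ : 0 < δ) :
    ∃ E : IntermediateField K L, FiniteDimensional K E ∧ ∀ y ∈ s, ∃ b ∈ E, ‖y - b‖ < δ := by
  obtain ⟨t, htfin, ht⟩ := Metric.totallyBounded_iff.1 hs δ hδ
  have := htfin.to_subtype
  refine ⟨adjoin K t, finiteDimensional_adjoin fun x _ => Algebra.IsIntegral.isIntegral x,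
    fun y hy => ?_⟩
  obtain ⟨b, hbt, hyb⟩ := Set.mem_iUnion₂.1 (ht hy)
  exact ⟨b, subset_adjoin K t hbt, by rwa [← dist_eq_norm]⟩

section NormedExtension

variable {K L : Type*} [NontriviallyNormedField K] [IsUltrametricDist K] [NormedField L]
  [NormedAlgebra K L]

lemma isometry_algEquiv [CompleteSpace K] [Algebra.IsAlgebraic K L] (σ : L ≃ₐ[K] L) :
    Isometry σ :=
  AddMonoidHomClass.isometry_of_norm σ fun x => by
    rw [NormedAlgebra.norm_eq_spectralNorm K, NormedAlgebra.norm_eq_spectralNorm K,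
      ← spectralNorm_eq_of_equiv]

lemma norm_coeff_minpoly_le_one [CompleteSpace K] [Algebra.IsAlgebraic K L] {y : L}
    (hy : ‖y‖ ≤ 1) (i : ℕ) : ‖(minpoly K y).coeff i‖ ≤ 1 := by
  rw [NormedAlgebra.norm_eq_spectralNorm K, spectralNorm] at hy
  exact (spectralValue_le_one_iff (minpoly.monic (Algebra.IsIntegral.isIntegral y))).1 hy i

variable (K L) in
lemma totallyBounded_closedBall_natDegree_minpoly_eq [ProperSpace K] [IsAlgClosed L]
    [Algebra.IsAlgebraic K L] (n : ℕ) :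
    TotallyBounded {y : L | ‖y‖ ≤ 1 ∧ (minpoly K y).natDegree = n} := by
  refine Metric.totallyBounded_iff.2 fun δ hδ => ?_
  -- A root of a monic polynomial of degree `n` moves by less than `((n + 1) * ε) ^ (1 / n) = δ`
  -- when the coefficients move by less than `ε`.
  have hε : 0 < δ ^ n / (n + 1) := by positivity
  obtain ⟨P, hPfin, hPmonic, hP⟩ := exists_finite_monic_norm_coeff_sub_lt K n 1 hε
  refine ⟨⋃ g ∈ P, g.rootSet L, hPfin.biUnion fun g _ => g.rootSet_finite L, ?_⟩
  rintro y ⟨hy, hyn⟩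
  have hint : IsIntegral K y := Algebra.IsIntegral.isIntegral y
  have hn : n ≠ 0 := hyn ▸ (minpoly.natDegree_pos hint).ne'
  obtain ⟨g, hgP, hg⟩ := hP _ (minpoly.monic hint) hyn (norm_coeff_minpoly_le_one hy)
  obtain ⟨hgm, hgn⟩ := hPmonic g hgP
  obtain ⟨b, hb, hyb⟩ := exists_aroots_norm_sub_lt_of_norm_coeff_sub_lt hε (minpoly.aeval K y)
    (minpoly.monic hint) hgm (hgn.trans hyn.symm) hg (IsAlgClosed.splits _)
  have hradius : ((n + 1) * (δ ^ n / (n + 1))) ^ (n : ℝ)⁻¹ = δ := by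
    rw [mul_div_cancel₀ _ (by positivity), Real.pow_rpow_inv_natCast hδ.le hn]
  rw [hyn, hradius, max_eq_right hy, mul_one, ← dist_eq_norm] at hyb
  exact Set.mem_iUnion₂.2 ⟨b, Set.mem_biUnion hgP (mem_rootSet'.2 (mem_aroots'.1 hb)), hyb⟩

variable (K L) in
lemma totallyBounded_closedBall_natDegree_minpoly_le [ProperSpace K] [IsAlgClosed L]
    [Algebra.IsAlgebraic K L] (D : ℕ) :
    TotallyBounded {y : L | ‖y‖ ≤ 1 ∧ (minpoly K y).natDegree ≤ D} := by
  refine ((totallyBounded_biUnion (Set.finite_Iic D)).2 fun n _ =>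
    totallyBounded_closedBall_natDegree_minpoly_eq K L n).subset fun y hy => ?_
  exact Set.mem_iUnion₂.2 ⟨_, hy.2, hy.1, rfl⟩

/- A form of Krasner's lemma whose separation constant `‖N !‖ / ‖c‖` depends only on the degree
bound `N`, not on `x`. -/
lemma mem_of_forall_exists_norm_sub_lt [CompleteSpace K] [Normal K L]
    {E : IntermediateField K L} {N : ℕ} {c : K} (hc : 1 < ‖c‖)
    (hE : ∀ y : L, ‖y‖ ≤ 1 → (minpoly K y).natDegree ≤ N * N →
      ∃ b ∈ E, ‖y - b‖ < ‖(N ! : K)‖ / ‖c‖)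
    {x : L} (hsep : IsSeparable K x) (hdeg : (minpoly K x).natDegree ≤ N) : x ∈ E := by
  have : IsUltrametricDist L := .of_normedAlgebra K
  by_contra hxE
  have hxbot : x ∉ (⊥ : Subalgebra E L) := by simpa [Algebra.mem_bot] using hxE
  obtain ⟨x', hne, hconj⟩ := (notMem_iff_exists_ne_and_isConjRoot (hsep.tower_top E)
    (Normal.splits inferInstance x)).1 hxbot
  obtain ⟨σ, rfl⟩ := isConjRoot_iff_exists_algEquiv.1 hconj.symm
  let τ : L ≃ₐ[K] L := σ.restrictScalars K
  have hint : IsIntegral K x := hsep.isIntegral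
  obtain ⟨u, -, hu_lt, hu_ge, -⟩ := rescale_to_shell hc one_pos (sub_ne_zero.2 hne.symm)
  have hsmul : u • (σ x - x) = τ (u • x) - u • x := by rw [map_smul, smul_sub]; rfl
  have hdeg_sub : (minpoly K (u • (σ x - x))).natDegree ≤ N * N := by
    refine (natDegree_minpoly_le_mul_of_mem_sup (hint.map τ) hint ?_).trans ?_
    · exact IntermediateField.smul_mem _ (sub_mem
        (le_sup_left (a := K⟮τ x⟯) (mem_adjoin_simple_self K _))
        (le_sup_right (a := K⟮τ x⟯) (mem_adjoin_simple_self K _)))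
    · rw [minpoly.algEquiv_eq]
      exact Nat.mul_le_mul hdeg hdeg
  obtain ⟨b, hbE, hb⟩ := hE _ hu_lt.le hdeg_sub
  have hperiodic : IsPeriodicPt τ N ! (u • x) :=
    (isPeriodicPt_factorial_of_natDegree_minpoly_le (τ : L →ₐ[K] L) hint hdeg).map
      fun y => (map_smul τ u y).symm
  have hfix : IsFixedPt τ b := σ.commutes ⟨b, hbE⟩
  refine hb.not_ge ?_
  calc ‖(N ! : K)‖ / ‖c‖ = ‖(N ! : K)‖ * (1 / ‖c‖) := div_eq_mul_one_div _ _
    _ ≤ ‖(N ! : K)‖ * ‖u • (σ x - x)‖ := by gcongr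
    _ = ‖N ! • (τ (u • x) - u • x)‖ := by rw [← norm_smul, hsmul, Nat.cast_smul_eq_nsmul]
    _ ≤ ‖u • (σ x - x) - b‖ := by
        rw [hsmul]
        exact norm_nsmul_map_sub_self_le (σ := (τ : L →+ L)) (isometry_algEquiv τ) hperiodic hfix

variable (K L) in
lemma exists_finiteDimensional_forall_natDegree_minpoly_le_mem [ProperSpace K] [IsAlgClosure K L]
    {N : ℕ} (hN : (N ! : K) ≠ 0) :
    ∃ E : IntermediateField K L, FiniteDimensional K E ∧
      ∀ x : L, (minpoly K x).natDegree ≤ N → x ∈ E := by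
  have : IsAlgClosed L := IsAlgClosure.isAlgClosed K
  have : Normal K L := IsAlgClosure.normal K L
  obtain ⟨c, hc⟩ := NormedField.exists_one_lt_norm K
  have hδ : 0 < ‖(N ! : K)‖ / ‖c‖ := div_pos (norm_pos_iff.2 hN) (one_pos.trans hc)
  obtain ⟨E, hEfin, hE⟩ := exists_finiteDimensional_norm_sub_lt_of_totallyBounded (K := K)
    (totallyBounded_closedBall_natDegree_minpoly_le K L (N * N)) hδ
  exact ⟨E, hEfin, fun x hx => mem_of_forall_exists_norm_sub_lt hc (fun y hy hyN => hE y ⟨hy, hyN⟩)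
    (isSeparable_of_natDegree_minpoly_le hN (Algebra.IsIntegral.isIntegral x) hx) hx⟩

end NormedExtension

theorem compositum_of_bounded_degree_finite_general {K : Type*} [NontriviallyNormedField K]
    [IsUltrametricDist K] [ProperSpace K] {N : ℕ} (hN : (N ! : K) ≠ 0)
    (Ω : Type*) [Field Ω] [Algebra K Ω] [IsAlgClosure K Ω] :
    FiniteDimensional K
      ↥(sSup {F : IntermediateField K Ω |
          FiniteDimensional K ↥F ∧ Module.finrank K ↥F ≤ N}) := by
  have : Algebra.IsAlgebraic K Ω := IsAlgClosure.isAlgebraic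
  let : NormedField Ω := spectralNorm.normedField K Ω
  let : NormedAlgebra K Ω := spectralNorm.normedAlgebra K Ω
  obtain ⟨E, hEfin, hE⟩ := exists_finiteDimensional_forall_natDegree_minpoly_le_mem K Ω hN
  have hle :
      sSup {F : IntermediateField K Ω | FiniteDimensional K F ∧ Module.finrank K F ≤ N} ≤ E :=
    sSup_le fun F ⟨_, hFN⟩ x hx => hE x ((natDegree_minpoly_le_finrank_of_mem hx).trans hFN)
  exact Module.Finite.of_injective (inclusion hle).toLinearMap (inclusion_injective hle)

/-- **Finiteness of the compositum.** For a prime `p`, an algebraic closure `Ω` of `ℚ_p`, and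
a positive integer `N`, the compositum inside `Ω` of all finite extensions of `ℚ_p` of degree
at most `N` (i.e. the supremum of all finite-dimensional intermediate fields of `Ω/ℚ_p` of
degree at most `N`) is itself a finite extension of `ℚ_p`. -/
theorem compositum_of_bounded_degree_finite (p : ℕ) [Fact p.Prime] (N : ℕ) (hN : 0 < N)
    (Ω : Type) [Field Ω] [Algebra ℚ_[p] Ω] [IsAlgClosure ℚ_[p] Ω] :
    FiniteDimensional ℚ_[p]
      ↥(sSup {F : IntermediateField ℚ_[p] Ω |
          FiniteDimensional ℚ_[p] ↥F ∧ Module.finrank ℚ_[p] ↥F ≤ N}) :=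
  compositum_of_bounded_degree_finite_general (Nat.cast_ne_zero.2 N.factorial_ne_zero) Ω
end

section
/- Let p be a prime, let m ≥ 2 be an integer, and let g ∈ ℂ_p[x] be a nonzero univariate polynomial with exactly m monomial terms. Then the number of roots x ∈ ℂ_p of g satisfying |x − 1|_p ≤ 1/p is at most 1.582·(m−1)·(1 + 1.443·(log(m−1) + 0.367)), where log denotes the natural logarithm. -/
/-!
Expand `g` around the centre `u = 1` as `g(u + y) = ∑ bₙ yⁿ`, and let `k + 1` be the number of terms
of `g`.

The last index `n` at which `|bₙ| rⁿ` is maximal is at least the number of roots of `g` in the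
closed disk of radius `r` around `u`, because each linear factor `y - a` with `|a| ≤ r` raises this
index by one.

On the other hand, sparse polynomials satisfy `|bₙ| ≤ nᵏ maxᵢ |bᵢ|`, the maximum being over `i ≤ k`.
This is an induction in the style of Rolle's theorem: dividing `g` by the largest possible power of
`x`, a unit of norm one near `u`, produces a constant term, which the derivative then kills. The
derivative multiplies `bᵢ₊₁` by `i + 1`, and `|i + 1| ≥ 1 / (i + 1)`.

Together these give `r⁻⁽ⁿ⁻ᵏ⁾ ≤ nᵏ`, hence `n log r⁻¹ ≤ k (log r⁻¹ + log n)`. Bounding `log n` by the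
tangent line of `log` at `e k / log r⁻¹` makes this a linear inequality in `n`; for `r = 1 / 2` the
decimals in the theorem are `e / (e - 1)`, `1 / log 2` and `-log (log 2)`, rounded up.
-/

open Finset Polynomial

section WeierstrassDegree

variable {K : Type*} [NormedField K] {r : ℝ} {Q : K[X]} {n : ℕ} {a : K}

/-- The `i`-th of the terms `‖coeff i‖ * r ^ i` whose maximum is the Gauss norm of `Q` on the closed
disk of radius `r`. -/
def gaussTerm (r : ℝ) (Q : K[X]) (i : ℕ) : ℝ :=
  ‖Q.coeff i‖ * r ^ i

/-- `n` is the Weierstrass degree of `Q` on the closed disk of radius `r`: the last index at which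
the Gauss norm is attained. It bounds the number of roots in the disk. Since the second inequality
is strict, no index qualifies for `Q = 0`. -/
def IsWeierstrassDegree (r : ℝ) (Q : K[X]) (n : ℕ) : Prop :=
  (∀ i, gaussTerm r Q i ≤ gaussTerm r Q n) ∧ ∀ i, n < i → gaussTerm r Q i < gaussTerm r Q n

lemma exists_isWeierstrassDegree (hr : 0 < r) (hQ : Q ≠ 0) : ∃ n, IsWeierstrassDegree r Q n := by
  -- Maximizing lexicographically selects the last of the maximizing indices.
  obtain ⟨n, hn, hmax⟩ := Q.support.exists_max_image (fun i => toLex (gaussTerm r Q i, i))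
    (support_nonempty.mpr hQ)
  have hpos : 0 < gaussTerm r Q n :=
    mul_pos (norm_pos_iff.mpr (mem_support_iff.mp hn)) (pow_pos hr n)
  have hzero : ∀ i ∉ Q.support, gaussTerm r Q i = 0 := fun i hi => by
    simp [gaussTerm, notMem_support_iff.mp hi]
  refine ⟨n, fun i => ?_, fun i hni => ?_⟩ <;> by_cases hi : i ∈ Q.support
  · exact (Prod.Lex.le_iff.mp (hmax i hi)).elim le_of_lt fun h => h.1.le
  · exact (hzero i hi).trans_le hpos.le
  · exact (Prod.Lex.le_iff.mp (hmax i hi)).resolve_right fun h => h.2.not_gt hni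
  · exact (hzero i hi).trans_lt hpos

lemma IsWeierstrassDegree.coeff_ne_zero (hr : 0 ≤ r) (h : IsWeierstrassDegree r Q n) :
    Q.coeff n ≠ 0 := by
  intro hn
  have hlt := h.2 (n + 1) n.lt_succ_self
  rw [gaussTerm, gaussTerm, hn, norm_zero, zero_mul] at hlt
  exact hlt.not_ge (by positivity)

lemma coeff_X_add_C_mul_succ {R : Type*} [Semiring R] (a : R) (Q : R[X]) (i : ℕ) :
    ((X + C a) * Q).coeff (i + 1) = Q.coeff i + a * Q.coeff (i + 1) := by
  simp [add_mul]

lemma gaussTerm_X_add_C_mul_zero_le (ha : ‖a‖ ≤ r) :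
    gaussTerm r ((X + C a) * Q) 0 ≤ r * gaussTerm r Q 0 := by
  simpa [gaussTerm, add_mul] using mul_le_mul_of_nonneg_right ha (norm_nonneg (Q.coeff 0))

variable [IsUltrametricDist K]

lemma gaussTerm_X_add_C_mul_succ_le (hr : 0 ≤ r) (ha : ‖a‖ ≤ r) (i : ℕ) :
    gaussTerm r ((X + C a) * Q) (i + 1) ≤ r * max (gaussTerm r Q i) (gaussTerm r Q (i + 1)) :=
  calc ‖((X + C a) * Q).coeff (i + 1)‖ * r ^ (i + 1)
    _ ≤ max ‖Q.coeff i‖ (r * ‖Q.coeff (i + 1)‖) * r ^ (i + 1) := by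
      rw [coeff_X_add_C_mul_succ]
      gcongr
      refine (IsUltrametricDist.norm_add_le_max _ _).trans ?_
      rw [norm_mul]
      gcongr
    _ = r * max (gaussTerm r Q i) (gaussTerm r Q (i + 1)) := by
      rw [gaussTerm, gaussTerm, max_mul_of_nonneg _ _ (by positivity), mul_max_of_nonneg _ _ hr]
      ring_nf

lemma gaussTerm_X_add_C_mul_succ_of_lt (hr : 0 < r) (ha : ‖a‖ ≤ r)
    (h : gaussTerm r Q (n + 1) < gaussTerm r Q n) :
    gaussTerm r ((X + C a) * Q) (n + 1) = r * gaussTerm r Q n := by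
  have hlt : ‖a * Q.coeff (n + 1)‖ < ‖Q.coeff n‖ := by
    refine lt_of_mul_lt_mul_right (a := r ^ n) ?_ (by positivity)
    calc ‖a * Q.coeff (n + 1)‖ * r ^ n
      _ ≤ r * ‖Q.coeff (n + 1)‖ * r ^ n := by rw [norm_mul]; gcongr
      _ = gaussTerm r Q (n + 1) := by rw [gaussTerm]; ring
      _ < ‖Q.coeff n‖ * r ^ n := h
  rw [gaussTerm, gaussTerm, coeff_X_add_C_mul_succ,
    IsUltrametricDist.norm_add_eq_max_of_norm_ne_norm hlt.ne', max_eq_left hlt.le]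
  ring

lemma IsWeierstrassDegree.X_add_C_mul (hr : 0 < r) (ha : ‖a‖ ≤ r) (h : IsWeierstrassDegree r Q n) :
    IsWeierstrassDegree r ((X + C a) * Q) (n + 1) := by
  obtain ⟨hle, hlt⟩ := h
  rw [IsWeierstrassDegree, gaussTerm_X_add_C_mul_succ_of_lt hr ha (hlt _ n.lt_succ_self)]
  refine ⟨fun i => ?_, fun i hi => ?_⟩
  · cases i with
    | zero =>
      exact (gaussTerm_X_add_C_mul_zero_le ha).trans (mul_le_mul_of_nonneg_left (hle 0) hr.le)
    | succ i =>
      exact (gaussTerm_X_add_C_mul_succ_le hr.le ha i).trans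
        (mul_le_mul_of_nonneg_left (max_le (hle _) (hle _)) hr.le)
  · obtain ⟨i, rfl⟩ := Nat.exists_eq_succ_of_ne_zero (Nat.ne_zero_of_lt hi)
    exact (gaussTerm_X_add_C_mul_succ_le hr.le ha i).trans_lt
      (mul_lt_mul_of_pos_left (max_lt (hlt _ (by omega)) (hlt _ (by omega))) hr)

lemma IsWeierstrassDegree.multiset_prod_X_sub_C_mul (hr : 0 < r) (h : IsWeierstrassDegree r Q n)
    (s : Multiset K) (hs : ∀ a ∈ s, ‖a‖ ≤ r) :
    IsWeierstrassDegree r ((s.map fun a => X - C a).prod * Q) (n + s.card) := by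
  induction s using Multiset.induction_on with
  | empty => simpa using h
  | cons a s ih =>
    rw [Multiset.forall_mem_cons] at hs
    rw [Multiset.map_cons, Multiset.prod_cons, mul_assoc, Multiset.card_cons, ← add_assoc,
      sub_eq_add_neg, ← C_neg]
    exact (ih hs.2).X_add_C_mul hr ((norm_neg a).trans_le hs.1)

lemma exists_isWeierstrassDegree_ge_countP_roots (hr : 0 < r) (hQ : Q ≠ 0) :
    ∃ n, Q.roots.countP (fun a => ‖a‖ ≤ r) ≤ n ∧ IsWeierstrassDegree r Q n := by
  set s := Q.roots.filter fun a => ‖a‖ ≤ r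
  obtain ⟨P, hP⟩ := (Multiset.prod_X_sub_C_dvd_iff_le_roots hQ s).mpr (Multiset.filter_le _ _)
  obtain ⟨n, hn⟩ := exists_isWeierstrassDegree hr (right_ne_zero_of_mul (hP ▸ hQ))
  refine ⟨n + s.card, ?_, ?_⟩
  · rw [Multiset.countP_eq_card_filter]
    exact Nat.le_add_left _ _
  · rw [hP]
    exact hn.multiset_prod_X_sub_C_mul hr s fun a ha => (Multiset.mem_filter.mp ha).2

end WeierstrassDegree

section Roots

variable {R : Type*} [CommRing R] [IsDomain R]

lemma roots_taylor (u : R) (g : R[X]) : (taylor u g).roots = g.roots.map fun x => x - u := by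
  simpa [taylor_apply] using roots_comp_C_mul_X_add_C g 1 u isUnit_one

lemma ncard_setOf_eval_eq_zero_and_le {g : R[X]} (hg : g ≠ 0) {S T : R → Prop} [DecidablePred T]
    (hST : ∀ x, S x → T x) : {x | g.eval x = 0 ∧ S x}.ncard ≤ g.roots.countP T := by
  classical
  calc {x | g.eval x = 0 ∧ S x}.ncard
    _ ≤ ((g.roots.filter T).toFinset : Set R).ncard :=
      Set.ncard_le_ncard (fun x hx => by simpa [hg] using ⟨hx.1, hST x hx.2⟩) (finite_toSet _)
    _ ≤ g.roots.countP T := by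
      rw [Set.ncard_coe_finset, Multiset.countP_eq_card_filter]
      exact Multiset.toFinset_card_le _

end Roots

section SparsePolynomials

lemma exists_eq_X_pow_mul_card_support_derivative_lt {R : Type*} [Semiring R] {f : R[X]}
    (hf : f ≠ 0) : ∃ a h, f = X ^ a * h ∧ #(derivative h).support < #f.support := by
  have htrail : f.coeff f.natTrailingDegree ≠ 0 := coeff_natTrailingDegree_ne_zero.mpr hf
  obtain ⟨h, hfh⟩ : X ^ f.natTrailingDegree ∣ f :=
    X_pow_dvd_iff.mpr fun d hd => coeff_eq_zero_of_lt_natTrailingDegree hd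
  generalize f.natTrailingDegree = a at htrail hfh
  refine ⟨a, h, hfh, ?_⟩
  calc #(derivative h).support
    _ = #((derivative h).support.map (addRightEmbedding (1 + a))) := (card_map _).symm
    _ < #f.support := by
      refine card_lt_card ((ssubset_iff_of_subset ?_).mpr ⟨a, mem_support_iff.mpr htrail, ?_⟩)
      · intro j hj
        obtain ⟨i, hi, rfl⟩ := mem_map.mp hj
        have hcoeff : h.coeff (i + 1) ≠ 0 := fun h0 =>
          mem_support_iff.mp hi (by rw [coeff_derivative, h0, zero_mul])
        rwa [addRightEmbedding_apply, ← add_assoc, mem_support_iff, hfh, coeff_X_pow_mul]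
      · simp [← add_assoc]

lemma coeff_taylor_derivative {R : Type*} [CommSemiring R] (u : R) (f : R[X]) (i : ℕ) :
    (taylor u (derivative f)).coeff i = (taylor u f).coeff (i + 1) * (i + 1) := by
  rw [← coeff_derivative, taylor_apply, taylor_apply, derivative_comp]
  simp

variable {K : Type*} [NormedField K]

lemma norm_coeff_taylor_succ_le (hK : ∀ i : ℕ, (i : ℝ)⁻¹ ≤ ‖(i : K)‖) (u : K) (f : K[X]) (i : ℕ) :
    ‖(taylor u f).coeff (i + 1)‖ ≤ (i + 1 : ℕ) * ‖(taylor u (derivative f)).coeff i‖ := by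
  rw [coeff_taylor_derivative, norm_mul, ← Nat.cast_add_one, mul_left_comm]
  exact le_mul_of_one_le_right (norm_nonneg _)
    ((inv_le_iff_one_le_mul₀' (by positivity)).mp (hK (i + 1)))

variable [IsUltrametricDist K] {u : K} {f : K[X]} {k n : ℕ}

lemma norm_coeff_taylor_derivative_le (u : K) (f : K[X]) (i : ℕ) :
    ‖(taylor u (derivative f)).coeff i‖ ≤ ‖(taylor u f).coeff (i + 1)‖ := by
  rw [coeff_taylor_derivative, norm_mul, ← Nat.cast_add_one]
  exact mul_le_of_le_one_right (norm_nonneg _) (IsUltrametricDist.norm_natCast_le_one K _)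

lemma forall_norm_coeff_X_add_C_mul_le_iff (hu : ‖u‖ = 1) {B : ℝ} :
    (∀ i ≤ n, ‖((X + C u) * f).coeff i‖ ≤ B) ↔ ∀ i ≤ n, ‖f.coeff i‖ ≤ B := by
  have hzero : ‖((X + C u) * f).coeff 0‖ = ‖f.coeff 0‖ := by simp [add_mul, hu]
  have hnorm : ∀ i, ‖u * f.coeff i‖ = ‖f.coeff i‖ := fun i => by rw [norm_mul, hu, one_mul]
  refine ⟨fun h i hi => ?_, fun h i hi => ?_⟩
  · induction i with
    | zero => exact hzero ▸ h 0 hi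
    | succ i ih =>
      rw [← hnorm, ← neg_add_cancel_left (f.coeff i) (u * f.coeff (i + 1)),
        ← coeff_X_add_C_mul_succ]
      refine (IsUltrametricDist.norm_add_le_max _ _).trans (max_le ?_ (h _ hi))
      exact (norm_neg _).trans_le (ih (by omega))
  · cases i with
    | zero => exact hzero.trans_le (h 0 hi)
    | succ i =>
      rw [coeff_X_add_C_mul_succ]
      refine (IsUltrametricDist.norm_add_le_max _ _).trans (max_le (h i (by omega)) ?_)
      exact (hnorm _).trans_le (h _ hi)

lemma forall_norm_coeff_taylor_X_pow_mul_le_iff (hu : ‖u‖ = 1) (a : ℕ) {B : ℝ} :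
    (∀ i ≤ n, ‖(taylor u (X ^ a * f)).coeff i‖ ≤ B) ↔ ∀ i ≤ n, ‖(taylor u f).coeff i‖ ≤ B := by
  rw [taylor_mul, taylor_X_pow]
  induction a with
  | zero => simp
  | succ a ih => rw [pow_succ', mul_assoc, forall_norm_coeff_X_add_C_mul_le_iff hu, ih]

lemma norm_coeff_taylor_le_mul_pow (hK : ∀ i : ℕ, (i : ℝ)⁻¹ ≤ ‖(i : K)‖) (hu : ‖u‖ = 1) {B : ℝ}
    (hn : n ≠ 0) (hf : #f.support ≤ k + 1) (hB : ∀ i ≤ k, ‖(taylor u f).coeff i‖ ≤ B) :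
    ∀ i ≤ n, ‖(taylor u f).coeff i‖ ≤ B * n ^ k := by
  have hB0 : 0 ≤ B := (norm_nonneg _).trans (hB 0 k.zero_le)
  induction k generalizing f with
  | zero =>
    obtain ⟨a, c, rfl⟩ := card_support_le_one_iff_monomial.mp hf
    rw [← C_mul_X_pow_eq_monomial, ← X_pow_mul, forall_norm_coeff_taylor_X_pow_mul_le_iff hu,
      taylor_C] at hB ⊢
    rintro (_ | i) -
    · simpa using hB 0 le_rfl
    · simpa using hB0
  | succ k ih =>
    rcases eq_or_ne f 0 with rfl | hf0
    · simp only [map_zero, coeff_zero, norm_zero]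
      exact fun _ _ => by positivity
    obtain ⟨a, h, rfl, hcard⟩ := exists_eq_X_pow_mul_card_support_derivative_lt hf0
    rw [forall_norm_coeff_taylor_X_pow_mul_le_iff hu] at hB ⊢
    have hderiv : ∀ i ≤ n, ‖(taylor u (derivative h)).coeff i‖ ≤ B * n ^ k :=
      ih (by omega) fun j hj => (norm_coeff_taylor_derivative_le u h j).trans (hB _ (by omega))
    rintro (_ | i) hi
    · have hn1 : (1 : ℝ) ≤ n := by exact_mod_cast Nat.one_le_iff_ne_zero.mpr hn
      exact (hB 0 (Nat.zero_le _)).trans (le_mul_of_one_le_right hB0 (one_le_pow₀ hn1))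
    calc ‖(taylor u h).coeff (i + 1)‖
      _ ≤ (i + 1 : ℕ) * ‖(taylor u (derivative h)).coeff i‖ := norm_coeff_taylor_succ_le hK u h i
      _ ≤ n * (B * n ^ k) := by gcongr; exact hderiv i (by omega)
      _ = B * n ^ (k + 1) := by ring

variable {r : ℝ}

lemma IsWeierstrassDegree.inv_pow_sub_le_pow (hK : ∀ i : ℕ, (i : ℝ)⁻¹ ≤ ‖(i : K)‖) (hu : ‖u‖ = 1)
    (hr : 0 < r) (hr1 : r ≤ 1) (hf : #f.support ≤ k + 1) (hkn : k ≤ n)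
    (h : IsWeierstrassDegree r (taylor u f) n) : r⁻¹ ^ (n - k) ≤ (n : ℝ) ^ k := by
  rcases eq_or_ne n 0 with rfl | hn
  · simp [Nat.le_zero.mp hkn]
  set b := (taylor u f).coeff
  have hbn : 0 < ‖b n‖ := norm_pos_iff.mpr (h.coeff_ne_zero hr.le)
  have hlow : ∀ i ≤ k, ‖b i‖ ≤ ‖b n‖ * r ^ (n - k) := fun i hi => by
    refine le_of_mul_le_mul_right ?_ (pow_pos hr k)
    calc ‖b i‖ * r ^ k
      _ ≤ ‖b i‖ * r ^ i := mul_le_mul_of_nonneg_left (pow_le_pow_of_le_one hr.le hr1 hi)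
        (norm_nonneg _)
      _ ≤ ‖b n‖ * r ^ n := h.1 i
      _ = ‖b n‖ * r ^ (n - k) * r ^ k := by rw [mul_assoc, ← pow_add, Nat.sub_add_cancel hkn]
  have hself : ‖b n‖ ≤ ‖b n‖ * r ^ (n - k) * n ^ k :=
    norm_coeff_taylor_le_mul_pow hK hu hn hf hlow n le_rfl
  rw [mul_assoc, le_mul_iff_one_le_right hbn] at hself
  rwa [inv_pow, inv_le_iff_one_le_mul₀' (by positivity)]

lemma IsWeierstrassDegree.mul_log_inv_le (hK : ∀ i : ℕ, (i : ℝ)⁻¹ ≤ ‖(i : K)‖) (hu : ‖u‖ = 1)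
    (hr : 0 < r) (hr1 : r ≤ 1) (hf : #f.support ≤ k + 1)
    (h : IsWeierstrassDegree r (taylor u f) n) :
    n * Real.log r⁻¹ ≤ k * (Real.log r⁻¹ + Real.log n) := by
  have hlogr : 0 ≤ Real.log r⁻¹ := Real.log_nonneg ((one_le_inv₀ hr).mpr hr1)
  rw [mul_add]
  rcases le_total n k with hnk | hkn
  · have hlogn : 0 ≤ k * Real.log n := mul_nonneg k.cast_nonneg (Real.log_natCast_nonneg n)
    have hmul : n * Real.log r⁻¹ ≤ k * Real.log r⁻¹ := by gcongr
    linarith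
  · have hlog := Real.log_le_log (by positivity) (h.inv_pow_sub_le_pow hK hu hr hr1 hf hkn)
    rw [Real.log_pow, Real.log_pow, Nat.cast_sub hkn] at hlog
    linarith

end SparsePolynomials

section RealEstimates

lemma log_le_div_add_log_sub_one {x t : ℝ} (hx : 0 < x) (ht : 0 < t) :
    Real.log x ≤ x / t + Real.log t - 1 := by
  have h := Real.log_le_sub_one_of_pos (div_pos hx ht)
  rw [Real.log_div hx.ne' ht.ne'] at h
  linarith

lemma mul_one_sub_exp_neg_one_le {k L x : ℝ} (hk : 0 < k) (hL : 0 < L) (hx : 0 < x)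
    (h : x * L ≤ k * (L + Real.log x)) :
    x * (1 - Real.exp (-1)) ≤ k * (1 + L⁻¹ * (Real.log k - Real.log L)) := by
  have htangent : Real.log x ≤ x * L / (Real.exp 1 * k) + (Real.log k - Real.log L) := by
    have h := log_le_div_add_log_sub_one hx (t := Real.exp 1 * k / L) (by positivity)
    rw [Real.log_div (by positivity) hL.ne', Real.log_mul (by positivity) hk.ne', Real.log_exp,
      div_div_eq_mul_div] at h
    linarith
  refine le_of_mul_le_mul_right ?_ hL
  calc x * (1 - Real.exp (-1)) * L
    _ = x * L - x * L * Real.exp (-1) := by ring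
    _ ≤ k * (L + (x * L / (Real.exp 1 * k) + (Real.log k - Real.log L)))
        - x * L * Real.exp (-1) := sub_le_sub_right (h.trans (by gcongr)) _
    _ = k * (1 + L⁻¹ * (Real.log k - Real.log L)) * L := by
      rw [Real.exp_neg]
      field_simp
      ring

lemma exp_neg_one_le : Real.exp (-1) ≤ 1 - 1 / 1.582 :=
  Real.exp_neg_one_lt_d9.le.trans (by norm_num)

lemma inv_log_two_le : (Real.log 2)⁻¹ ≤ 1.443 :=
  (inv_anti₀ (by norm_num) Real.log_two_gt_d9.le).trans (by norm_num)

lemma neg_log_log_two_le : -Real.log (Real.log 2) ≤ 0.367 := by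
  have hlog : 0 < Real.log 2 := Real.log_pos one_lt_two
  rw [← Real.log_inv, Real.log_le_iff_le_exp (inv_pos.mpr hlog)]
  calc (Real.log 2)⁻¹
    _ ≤ 0.6931471803⁻¹ := inv_anti₀ (by norm_num) Real.log_two_gt_d9.le
    _ ≤ ∑ i ∈ range 5, (0.367 : ℝ) ^ i / i.factorial := by
      norm_num [sum_range_succ, Nat.factorial]
    _ ≤ Real.exp 0.367 := Real.sum_le_exp_of_nonneg (by norm_num) 5

lemma le_of_mul_log_two_le {k x : ℝ} (hk : 1 ≤ k) (hx : 0 < x)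
    (h : x * Real.log 2 ≤ k * (Real.log 2 + Real.log x)) :
    x ≤ 1.582 * k * (1 + 1.443 * (Real.log k + 0.367)) := by
  have hlogk : 0 ≤ Real.log k := Real.log_nonneg hk
  have hexact := mul_one_sub_exp_neg_one_le (by linarith) (Real.log_pos one_lt_two) hx h
  calc x
    _ = 1.582 * (x * (1 - (1 - 1 / 1.582))) := by ring
    _ ≤ 1.582 * (x * (1 - Real.exp (-1))) := by gcongr; exact exp_neg_one_le
    _ ≤ 1.582 * (k * (1 + (Real.log 2)⁻¹ * (Real.log k + 0.367))) := by
      refine mul_le_mul_of_nonneg_left (hexact.trans ?_) (by norm_num)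
      rw [sub_eq_add_neg]
      gcongr
      exact neg_log_log_two_le
    _ ≤ 1.582 * (k * (1 + 1.443 * (Real.log k + 0.367))) := by gcongr; exact inv_log_two_le
    _ = 1.582 * k * (1 + 1.443 * (Real.log k + 0.367)) := by ring

end RealEstimates

theorem lenstra_univariate_bound_general {K : Type*} [NormedField K] [IsUltrametricDist K]
    (hK : ∀ i : ℕ, (i : ℝ)⁻¹ ≤ ‖(i : K)‖) {u : K} (hu : ‖u‖ = 1) {m : ℕ} (hm : 2 ≤ m) {g : K[X]}
    (hg : g ≠ 0) (hsupp : #g.support ≤ m) :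
    (g.roots.countP (fun x => ‖x - u‖ ≤ 1 / 2) : ℝ) ≤
      1.582 * ((m : ℝ) - 1) * (1 + 1.443 * (Real.log ((m : ℝ) - 1) + 0.367)) := by
  obtain ⟨k, rfl⟩ := Nat.exists_eq_add_of_le' (one_le_two.trans hm)
  have hk : (1 : ℝ) ≤ k := by exact_mod_cast Nat.le_of_succ_le_succ hm
  rw [Nat.cast_add_one, add_sub_cancel_right]
  obtain ⟨n, hroots, hn⟩ := exists_isWeierstrassDegree_ge_countP_roots (r := 1 / 2) (by norm_num)
    (mt (taylor_eq_zero u g).mp hg)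
  rw [roots_taylor, Multiset.countP_map, ← Multiset.countP_eq_card_filter] at hroots
  refine (Nat.cast_le.mpr hroots).trans ?_
  rcases n.eq_zero_or_pos with rfl | hn0
  · have : 0 ≤ Real.log k := Real.log_nonneg hk
    rw [Nat.cast_zero]
    positivity
  · have hlog := hn.mul_log_inv_le hK hu (by norm_num) (by norm_num) hsupp
    rw [one_div, inv_inv] at hlog
    exact le_of_mul_log_two_le hk (Nat.cast_pos.mpr hn0) hlog

lemma inv_natCast_le_norm_padic (p : ℕ) [Fact p.Prime] (i : ℕ) : (i : ℝ)⁻¹ ≤ ‖(i : ℚ_[p])‖ := by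
  rcases eq_or_ne i 0 with rfl | hi
  · simp
  have hp : (0 : ℝ) < p := by exact_mod_cast (Fact.out : p.Prime).pos
  rw [Padic.norm_eq_zpow_neg_valuation (Nat.cast_ne_zero.mpr hi), Padic.valuation_natCast, zpow_neg,
    zpow_natCast]
  gcongr
  exact_mod_cast Nat.le_of_dvd (Nat.pos_of_ne_zero hi) pow_padicValNat_dvd

lemma inv_natCast_le_norm_of_isometry_padic {p : ℕ} [Fact p.Prime] {K : Type*} [NormedField K]
    [Algebra ℚ_[p] K] (hiso : Isometry (algebraMap ℚ_[p] K)) (i : ℕ) : (i : ℝ)⁻¹ ≤ ‖(i : K)‖ := by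
  rw [← map_natCast (algebraMap ℚ_[p] K), hiso.norm_map_of_map_zero (map_zero _)]
  exact inv_natCast_le_norm_padic p i

/-- **Lenstra's univariate bound.** Let `p` be a prime, `m ≥ 2`, and let `g` be a nonzero
univariate polynomial over `ℂ_p` with exactly `m` monomial terms.  Then the number of roots
`x ∈ ℂ_p` of `g` with `|x - 1|_p ≤ 1/p` is at most
`1.582·(m-1)·(1 + 1.443·(log(m-1) + 0.367))`.  Here `Cp` is any field satisfying the
characterizing axioms of `ℂ_p`. -/
theorem lenstra_univariate_bound (p : ℕ) [Fact p.Prime] (m : ℕ) (hm : 2 ≤ m)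
    (Cp : Type) [NormedField Cp] [IsUltrametricDist Cp]
    [CompleteSpace Cp] [IsAlgClosed Cp] [Algebra ℚ_[p] Cp]
    (hiso : Isometry (algebraMap ℚ_[p] Cp))
    (hdense : Dense {x : Cp | IsAlgebraic ℚ_[p] x})
    (g : Polynomial Cp) (hg : g ≠ 0) (hsupp : g.support.card = m) :
    {x : Cp | Polynomial.eval x g = 0 ∧ ‖x - 1‖ ≤ 1 / (p : ℝ)}.Finite ∧
    ({x : Cp | Polynomial.eval x g = 0 ∧ ‖x - 1‖ ≤ 1 / (p : ℝ)}.ncard : ℝ) ≤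
      1.582 * ((m : ℝ) - 1) * (1 + 1.443 * (Real.log ((m : ℝ) - 1) + 0.367)) := by
  have hr : 1 / (p : ℝ) ≤ 1 / 2 := by gcongr; exact_mod_cast (Fact.out : p.Prime).two_le
  have hK := inv_natCast_le_norm_of_isometry_padic hiso
  exact ⟨(finite_setOfPred_isRoot hg).subset fun _ hx => hx.1,
    (Nat.cast_le.mpr (ncard_setOf_eval_eq_zero_and_le hg fun _ hx => hx.trans hr)).trans
      (lenstra_univariate_bound_general hK norm_one hm hg hsupp.le)⟩
end
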